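/- Let q ≠ 0, let m = (m_1,…,m_ℓ) be a composition of n with all m_j ≥ 1, and let x̄_1,…,x̄_ℓ be arbitrary weights. The characteristic polynomial of the transition matrix of T_{W_m}(q,x̄) equals the product over all upper sets S of the poset P_m, with S determined by the weak composition a = (a_1,…,a_ℓ) (0 ≤ a_j ≤ m_j), of (t − λ_a(q,x̄))^{d_{P_m∖S}}, where λ_a(q,x̄) = ∑_{j=1}^ℓ x̄_j · q^{a_{j+1}+⋯+a_ℓ}·[a_j]_q / (q^{n−n_j}·[m_j]_q) and d_{P_m∖S} is the number of poset derangements of the complement P_m∖S. In particular, each λ_a(q,x̄) is an eigenvalue of T_{W_m}(q,x̄) with algebraic multiplicity d_{P_m∖S}. -/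

import Mathlib

/-!
STATEMENT 5: characteristic polynomial of the q-Tsetlin library on words.
-/

open scoped Classical

noncomputable section

namespace QTsetlin

variable {K : Type} [Field K]

/-- The q-integer `[a]_q = 1 + q + ⋯ + q^{a-1}`. -/
def qInt (q : K) (a : ℕ) : K := ∑ r ∈ Finset.range a, q ^ r

/-- `n_j = m_1 + ⋯ + m_j` (the first `j` parts of the composition, `j : ℕ`). -/
def nsum (l : ℕ) (m : Fin l → ℕ) (j : ℕ) : ℕ :=
  ∑ t ∈ Finset.univ.filter fun t : Fin l => (t : ℕ) < j, m t

/-- Words of length `n` in the alphabet `{1,…,l}` with exactly `m j` occurrences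
of each letter `j` (letters are 0-based in Lean). -/
abbrev Words (n l : ℕ) (m : Fin l → ℕ) : Type :=
  {w : Fin n → Fin l // ∀ j, (Finset.univ.filter fun i => w i = j).card = m j}

/-- Matrix (row convention) of the Hecke generator `T_{k+1}` (paper indexing) on words. -/
def genMatW (n l : ℕ) (m : Fin l → ℕ) (q : K) (k : ℕ) :
    Matrix (Words n l m) (Words n l m) K := fun w u =>
  if h : k + 1 < n then
    if w.1 ⟨k + 1, h⟩ ≤ w.1 ⟨k, Nat.lt_of_succ_lt h⟩ then
      (if u.1 = w.1 ∘ Equiv.swap ⟨k, Nat.lt_of_succ_lt h⟩ ⟨k + 1, h⟩ then q else 0)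
    else
      (if u.1 = w.1 ∘ Equiv.swap ⟨k, Nat.lt_of_succ_lt h⟩ ⟨k + 1, h⟩ then 1 else 0)
        + (if u = w then q - 1 else 0)
  else 0

/-- Matrix of the product `T_k T_{k-1} ⋯ T_1` (paper indexing) on words. -/
def prodGenW (n l : ℕ) (m : Fin l → ℕ) (q : K) : ℕ → Matrix (Words n l m) (Words n l m) K
  | 0 => 1
  | k + 1 => genMatW n l m q k * prodGenW n l m q k

/-- Matrix of the weighting operator `X_{W_m}(q,x̄)`. -/
def XW (n l : ℕ) (m : Fin l → ℕ) (q : K) (xb : Fin l → K) :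
    Matrix (Words n l m) (Words n l m) K := fun w u =>
  if u = w then
    (if h : 0 < n then
      xb (w.1 ⟨0, h⟩) /
        (q ^ (∑ t ∈ Finset.univ.filter fun t : Fin l => w.1 ⟨0, h⟩ < t, m t)
          * qInt q (m (w.1 ⟨0, h⟩)))
    else 0)
  else 0

/-- Matrix of the q-Tsetlin library operator `T_{W_m}(q,x̄)` on words (row convention). -/
def TWm (n l : ℕ) (m : Fin l → ℕ) (q : K) (xb : Fin l → K) :
    Matrix (Words n l m) (Words n l m) K :=
  (∑ k ∈ Finset.range n, prodGenW n l m q k) * XW n l m q xb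

/-- The (0-based) index of the chain of `P_c` containing the (0-based) label `v`:
the smallest `j` with `v < c_1 + ⋯ + c_{j+1}`. -/
def blockOf (l : ℕ) (c : Fin l → ℕ) (v : ℕ) : ℕ :=
  sInf {j : ℕ | v < nsum l c (j + 1)}

/-- `π` (as a listing of the labels `π_1 π_2 … π_N`) is a linear extension of the union of
chains `P_c` on `N` labels, labelled consecutively within chains: labels belonging to the
same chain must occur in increasing order. -/
def isLinExt (l N : ℕ) (c : Fin l → ℕ) (π : Equiv.Perm (Fin N)) : Prop :=
  ∀ a b : Fin N, a < b → blockOf l c (π a) = blockOf l c (π b) → π a < π b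

/-- The number of poset derangements of the union of chains `P_c` (with `N = c_1 + ⋯ + c_l`
labels): linear extensions that are derangements as bijections on labels. -/
def posetDerangeCount (l N : ℕ) (c : Fin l → ℕ) : ℕ :=
  (Finset.univ.filter fun π : Equiv.Perm (Fin N) =>
    isLinExt l N c π ∧ ∀ a, π a ≠ a).card

/-- The eigenvalue
`λ_a(q,x̄) = ∑_j x̄_j q^{a_{j+1} + ⋯ + a_ℓ} [a_j]_q / (q^{n - n_j} [m_j]_q)`
attached to an upper set of `P_m` described by a weak composition `a ≤ m`. -/
def lambdaA (n l : ℕ) (m : Fin l → ℕ) (q : K) (xb : Fin l → K) (a : Fin l → ℕ) : K :=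
  ∑ j : Fin l,
    xb j * (q ^ (∑ t ∈ Finset.univ.filter fun t : Fin l => j < t, a t) * qInt q (a j)) /
      (q ^ (n - nsum l m ((j : ℕ) + 1)) * qInt q (m j))

/-!
The library operators of all contents `m` act at once on the free algebra spanned by all words.
There the unweighted operator `∑ i, T_{i-1} ⋯ T_1` is `∑ j, prepend j ∘ ∂_j` for skew derivations
`∂_j`, which `q`-commute: `∂_k ∂_j = q ∂_j ∂_k` for `j < k`. For weights `y_j` on the letters one
finds `∂_k ∘ library y = (y_k + library y') ∘ ∂_k` with shifted weights `y'`, so that up to the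
scalar `y_k` the derivation `∂_k` intertwines the library operator of content `m + e_k` with one of
content `m`. When no `[r]_q` vanishes, `∂_k` is moreover surjective between the joint kernels of
the `∂_j` with `j > k`. The resulting exact sequences express the characteristic polynomial through
the kernel of all the `∂_j`, on which the operator vanishes.

The dimension of this kernel in content `m` is the number of poset derangements of `P_m`, because
both satisfy the same recursion: the permutations that increase along every chain and have no fixed
point in the chains above a given one are treated like the joint kernels, the removal of a fixed
point playing the role of `∂_k`. Finally, both sides of the identity are polynomial in `q` and the
weights per letter, so the case of algebraically independent `q` and `y_j` implies all others.
-/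

section SkewDerivations

variable {R : Type*} [CommRing R] {α : Type*} [LinearOrder α] [Fintype α]

/-- The module with basis all words (of any length) in the alphabet `α`: the underlying module of
the free algebra, on which the library operators of all contents `m` act at once. -/
abbrev WordModule (R α : Type*) [CommRing R] : Type _ := List α →₀ R

/-- Left multiplication by the letter `a` in the free algebra. -/
def prepend (a : α) : Module.End R (WordModule R α) :=
  Finsupp.lmapDomain R R (List.cons a)

/-- The value of `skewDeriv q j` on a single word. Up to powers of `q`, it sums over the ways of
deleting a letter `j`; the term with factor `q - 1` is the correction produced by the quadratic
relation of the Hecke algebra. -/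
def skewDerivWord (q : R) : List α → α → WordModule R α
  | [], _ => 0
  | a :: u, j =>
    (if j ≤ a then q else 1) • prepend a (skewDerivWord q u j) +
      if j = a then
        Finsupp.single u 1 + (q - 1) • ∑ i with j < i, prepend i (skewDerivWord q u i)
      else 0

/-- The skew derivation `∂_j` of the free algebra: the part of the unweighted library operator
`∑ i, T_{i-1} ⋯ T_1` that brings a letter `j` to the front, followed by the removal of that
letter. -/
def skewDeriv (q : R) (j : α) : Module.End R (WordModule R α) :=
  Finsupp.linearCombination R fun w => skewDerivWord q w j

/-- The library operator with weights `y`, acting on words of all contents: a word with first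
letter `j` in the image of the unweighted operator is weighted by `y j`. -/
def library (q : R) (y : α → R) : Module.End R (WordModule R α) :=
  ∑ j, y j • (prepend j ∘ₗ skewDeriv q j)

/-- The weights `y'` for which `∂_k ∘ library q y = (y k + library q y') ∘ ∂_k`. -/
def shiftWeights (q : R) (k : α) (y : α → R) : α → R :=
  fun j => if k < j then y j + (q - 1) * y k else q * y j

omit [LinearOrder α] [Fintype α] in
@[simp]
lemma prepend_single (a : α) (w : List α) (c : R) :
    prepend a (Finsupp.single w c) = Finsupp.single (a :: w) c :=
  Finsupp.mapDomain_single

@[simp]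
lemma skewDeriv_single (q : R) (j : α) (w : List α) :
    skewDeriv q j (Finsupp.single w 1) = skewDerivWord q w j := by
  simp [skewDeriv]

lemma library_apply (q : R) (y : α → R) (v : WordModule R α) :
    library q y v = ∑ j, y j • prepend j (skewDeriv q j v) := by
  simp [library]

lemma library_smul (q c : R) (y : α → R) : library q (c • y) = c • library q y := by
  simp [library, Finset.smul_sum, smul_smul]

lemma library_indicator_apply (q : R) (j : α) (v : WordModule R α) :
    library q ((Set.Ioi j).indicator 1) v = ∑ i with j < i, prepend i (skewDeriv q i v) := by
  simp [library_apply, Finset.sum_filter, Set.indicator_apply]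

lemma skewDeriv_prepend (q : R) (j a : α) (v : WordModule R α) :
    skewDeriv q j (prepend a v) = (if j ≤ a then q else 1) • prepend a (skewDeriv q j v) +
      if j = a then v + (q - 1) • library q ((Set.Ioi j).indicator 1) v else 0 := by
  induction v using Finsupp.induction_linear with
  | zero => simp
  | add v w hv hw =>
    simp only [map_add, hv, hw, smul_add]
    split_ifs <;> abel
  | single w c =>
    have hw : skewDeriv q j (prepend a (Finsupp.single w 1)) =
        (if j ≤ a then q else 1) • prepend a (skewDeriv q j (Finsupp.single w 1)) +
          if j = a then Finsupp.single w 1 +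
            (q - 1) • library q ((Set.Ioi j).indicator 1) (Finsupp.single w 1) else 0 := by
      simp [library_indicator_apply, skewDerivWord]
    rw [← Finsupp.smul_single_one]
    simp only [map_smul, hw, smul_add, smul_ite, smul_zero, smul_comm c]

lemma skewDeriv_prepend_self (q : R) (j : α) (v : WordModule R α) :
    skewDeriv q j (prepend j v) = q • prepend j (skewDeriv q j v) +
      (v + (q - 1) • library q ((Set.Ioi j).indicator 1) v) := by
  simp [skewDeriv_prepend]

lemma skewDeriv_prepend_of_ne (q : R) {j a : α} (h : j ≠ a) (v : WordModule R α) :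
    skewDeriv q j (prepend a v) = (if j ≤ a then q else 1) • prepend a (skewDeriv q j v) := by
  simp [skewDeriv_prepend, h]

/-- The `q`-commutation relations between the skew derivations hold at the element `v`. -/
def SkewCommuteAt (q : R) (v : WordModule R α) : Prop :=
  ∀ ⦃j k : α⦄, j < k → skewDeriv q k (skewDeriv q j v) = q • skewDeriv q j (skewDeriv q k v)

lemma SkewCommuteAt.skewDeriv_library {q : R} {v : WordModule R α} (hv : SkewCommuteAt q v)
    (k : α) (y : α → R) :
    skewDeriv q k (library q y v) =
      y k • skewDeriv q k v + library q (shiftWeights q k y) (skewDeriv q k v) := by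
  have term (j : α) : y j • skewDeriv q k (prepend j (skewDeriv q j v)) =
      (shiftWeights q k y j - if k < j then (q - 1) * y k else 0) •
          prepend j (skewDeriv q j (skewDeriv q k v)) +
        if j = k then y k • (skewDeriv q k v +
          (q - 1) • library q ((Set.Ioi k).indicator 1) (skewDeriv q k v)) else 0 := by
    rcases lt_trichotomy j k with h | rfl | h
    · simp [skewDeriv_prepend_of_ne q h.ne', shiftWeights, h.not_ge, h.not_gt, h.ne, hv h,
        smul_smul, mul_comm]
    · simp [skewDeriv_prepend_self, shiftWeights, smul_smul, mul_comm]
    · simp [skewDeriv_prepend_of_ne q h.ne, shiftWeights, h.le, h, h.ne', hv h]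
  calc skewDeriv q k (library q y v)
      = ∑ j, y j • skewDeriv q k (prepend j (skewDeriv q j v)) := by simp [library_apply]
    _ = library q (shiftWeights q k y) (skewDeriv q k v) -
          ((q - 1) * y k) • library q ((Set.Ioi k).indicator 1) (skewDeriv q k v) +
          y k • (skewDeriv q k v +
            (q - 1) • library q ((Set.Ioi k).indicator 1) (skewDeriv q k v)) := by
        simp only [term, Finset.sum_add_distrib, sub_smul, Finset.sum_sub_distrib,
          Finset.sum_ite_eq', Finset.mem_univ, if_true, library_apply q (shiftWeights q k y),
          library_indicator_apply, Finset.sum_filter, Finset.smul_sum, ite_smul, smul_ite,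
          zero_smul, smul_zero]
    _ = _ := by module

omit [Fintype α] in
lemma shiftWeights_indicator_Ioi_of_lt (q : R) {j k : α} (h : j < k) :
    shiftWeights q k ((Set.Ioi j).indicator 1) = q • (Set.Ioi j).indicator 1 := by
  funext i
  by_cases hki : k < i
  · simp [shiftWeights, h, hki, h.trans hki]
  · simp [shiftWeights, hki]

omit [Fintype α] in
lemma shiftWeights_indicator_Ioi_of_gt (q : R) {j k : α} (h : k < j) :
    shiftWeights q k ((Set.Ioi j).indicator 1) = (Set.Ioi j).indicator 1 := by
  funext i
  by_cases hki : k < i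
  · simp [shiftWeights, hki, h.le]
  · simp [shiftWeights, hki, (not_lt.1 hki).trans h.le]

lemma SkewCommuteAt.prepend {q : R} {v : WordModule R α} (hv : SkewCommuteAt q v) (a : α) :
    SkewCommuteAt q (prepend a v) := by
  intro j k hjk
  by_cases hja : j = a
  · subst hja
    rw [skewDeriv_prepend_of_ne q hjk.ne', skewDeriv_prepend_self]
    simp only [map_add, map_smul, hv.skewDeriv_library, skewDeriv_prepend_of_ne q hjk.ne',
      skewDeriv_prepend_self, hv hjk, shiftWeights_indicator_Ioi_of_lt q hjk, library_smul,
      LinearMap.smul_apply, hjk.not_ge, if_false, Set.indicator_of_mem (Set.mem_Ioi.2 hjk),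
      Pi.one_apply]
    module
  by_cases hka : k = a
  · subst hka
    rw [skewDeriv_prepend_of_ne q hjk.ne, skewDeriv_prepend_self]
    simp only [map_add, map_smul, hv.skewDeriv_library, skewDeriv_prepend_of_ne q hjk.ne,
      skewDeriv_prepend_self, hv hjk, shiftWeights_indicator_Ioi_of_gt q hjk,
      hjk.le, if_true, Set.indicator_of_notMem (Set.notMem_Ioi.2 hjk.le)]
    module
  · simp only [skewDeriv_prepend_of_ne q hja, skewDeriv_prepend_of_ne q hka, map_smul, hv hjk,
      smul_smul]
    congr 1
    ring

lemma skewCommuteAt (q : R) (v : WordModule R α) : SkewCommuteAt q v := by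
  induction v using Finsupp.induction_linear with
  | zero => intro j k _; simp
  | add v w hv hw => intro j k h; simp [hv h, hw h]
  | single w c =>
    have hw : SkewCommuteAt q (Finsupp.single w (1 : R)) := by
      induction w with
      | nil => intro j k _; simp [skewDerivWord]
      | cons a w ih => simpa using ih.prepend a
    intro j k h
    rw [← Finsupp.smul_single_one]
    simp only [map_smul, hw h, smul_comm c]

lemma skewDeriv_library (q : R) (k : α) (y : α → R) (v : WordModule R α) :
    skewDeriv q k (library q y v) =
      y k • skewDeriv q k v + library q (shiftWeights q k y) (skewDeriv q k v) :=
  (skewCommuteAt q v).skewDeriv_library k y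

end SkewDerivations

section Content

variable {R : Type*} [CommRing R] {α : Type*}

lemma map_mem_of_mem_supported {ι M : Type*} [AddCommGroup M] [Module R M] {S : Set ι}
    {f : (ι →₀ R) →ₗ[R] M} {p : Submodule R M} (h : ∀ i ∈ S, f (Finsupp.single i 1) ∈ p)
    {v : ι →₀ R} (hv : v ∈ Finsupp.supported R R S) : f v ∈ p := by
  have hp : Finsupp.supported R R S ≤ p.comap f := by
    rw [Finsupp.supported_eq_span_single, Submodule.span_le]
    rintro _ ⟨i, hi, rfl⟩
    exact h i hi
  exact hp hv

variable [LinearOrder α]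

/-- The span of the words in which each letter `j` occurs exactly `m j` times. -/
def contentSubmodule (R : Type*) [CommRing R] (m : α → ℕ) : Submodule R (WordModule R α) :=
  Finsupp.supported R R {w | ∀ j, w.count j = m j}

lemma content_induction (j : α) {P : (α → ℕ) → Prop} (zero : ∀ m, m j = 0 → P m)
    (add_single : ∀ m, P m → P (m + Pi.single j 1)) (m : α → ℕ) : P m := by
  induction h : m j generalizing m with
  | zero => exact zero m h
  | succ r ih =>
    have hm : m - Pi.single j 1 + Pi.single j 1 = m :=
      tsub_add_cancel_of_le <| update_le_iff.2 ⟨by omega, fun _ _ => Nat.zero_le _⟩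
    rw [← hm]
    exact add_single _ <| ih _ <| by simp [h]

omit [LinearOrder α] in
lemma prepend_mem_supported {S T : Set (List α)} {a : α} (h : ∀ u ∈ S, a :: u ∈ T)
    {v : WordModule R α} (hv : v ∈ Finsupp.supported R R S) :
    prepend a v ∈ Finsupp.supported R R T :=
  map_mem_of_mem_supported (f := prepend a)
    (fun u hu => by simpa using Finsupp.single_mem_supported R 1 (h u hu)) hv

lemma prepend_mem_content {m : α → ℕ} (j : α) {v : WordModule R α}
    (hv : v ∈ contentSubmodule R m) : prepend j v ∈ contentSubmodule R (m + Pi.single j 1) :=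
  prepend_mem_supported (fun u hu i => by
    simp [List.count_cons, hu i, Pi.single_apply, eq_comm (a := i)]) hv

variable [Fintype α]

lemma length_eq_sum_of_count_eq {m : α → ℕ} {w : List α} (hw : ∀ j, w.count j = m j) :
    w.length = ∑ j, m j := by
  simpa [funext hw] using
    (Multiset.sum_count_eq_card (s := Finset.univ) (m := (w : Multiset α)) (by simp)).symm

omit [Fintype α] in
lemma finite_setOf_count_eq [Finite α] (m : α → ℕ) :
    {w : List α | ∀ j, w.count j = m j}.Finite := by
  have := Fintype.ofFinite α
  exact (List.finite_length_eq α (∑ j, m j)).subset fun _ => length_eq_sum_of_count_eq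

omit [Fintype α] in
instance [Finite α] (m : α → ℕ) : Module.Finite R (contentSubmodule R m) :=
  have := (finite_setOf_count_eq m).to_subtype
  Module.Finite.equiv (Finsupp.supportedEquivFinsupp (M := R) (R := R) _).symm

lemma skewDerivWord_mem_supported_perm (q : R) (w : List α) (j : α) :
    skewDerivWord q w j ∈ Finsupp.supported R R {u | (j :: u).Perm w} := by
  induction w generalizing j with
  | nil => exact Submodule.zero_mem _
  | cons a u ih =>
    refine Submodule.add_mem _ (Submodule.smul_mem _ _ <| prepend_mem_supported
      (fun x hx => (List.Perm.swap a j x).trans (hx.cons a)) (ih j)) ?_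
    split_ifs with h
    · subst h
      exact Submodule.add_mem _ (Finsupp.single_mem_supported R 1 (List.Perm.refl _)) <|
        Submodule.smul_mem _ _ <| Submodule.sum_mem _ fun i _ =>
          prepend_mem_supported (fun x hx => hx.cons j) (ih i)
    · exact Submodule.zero_mem _

lemma skewDeriv_mem_content (q : R) {m : α → ℕ} {j : α} {v : WordModule R α}
    (hv : v ∈ contentSubmodule R (m + Pi.single j 1)) :
    skewDeriv q j v ∈ contentSubmodule R m :=
  map_mem_of_mem_supported (fun w hw => by
    rw [skewDeriv_single]
    refine Finsupp.supported_mono (fun u hu i => ?_) (skewDerivWord_mem_supported_perm q w j)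
    have := hu.count_eq i
    simp only [hw i, List.count_cons, Pi.add_apply, Pi.single_apply, beq_iff_eq] at this
    grind) hv

lemma skewDeriv_eq_zero_of_content_eq_zero (q : R) {m : α → ℕ} {j : α} (hj : m j = 0)
    {v : WordModule R α} (hv : v ∈ contentSubmodule R m) : skewDeriv q j v = 0 := by
  refine (Submodule.mem_bot R).1 <| map_mem_of_mem_supported (fun w hw => ?_) hv
  rw [skewDeriv_single]
  have hempty : {u | (j :: u).Perm w} = ∅ := by
    refine Set.eq_empty_of_forall_notMem fun u hu => ?_
    have := hu.count_eq j
    simp [hw j, hj] at this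
  simpa [hempty] using skewDerivWord_mem_supported_perm q w j

lemma skewDeriv_pow_content_eq_zero (q : R) (j : α) (m : α → ℕ) :
    ∀ v ∈ contentSubmodule R m, (skewDeriv q j ^ (m j + 1)) v = 0 := by
  induction m using content_induction j with
  | zero m hj => intro v hv; simpa [hj] using skewDeriv_eq_zero_of_content_eq_zero q hj hv
  | add_single m ih =>
    intro v hv
    simpa [pow_succ] using ih _ (skewDeriv_mem_content q hv)

lemma library_mem_content (q : R) (y : α → R) {m : α → ℕ} {v : WordModule R α}
    (hv : v ∈ contentSubmodule R m) : library q y v ∈ contentSubmodule R m := by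
  rw [library_apply]
  refine Submodule.sum_mem _ fun j _ => Submodule.smul_mem _ _ ?_
  induction m using content_induction j with
  | zero m hj => simp [skewDeriv_eq_zero_of_content_eq_zero q hj hv]
  | add_single m _ => exact prepend_mem_content j (skewDeriv_mem_content q hv)

end Content

section JointKernels

variable {R : Type*} [CommRing R] {α : Type*} [LinearOrder α] [Fintype α]

/-- The elements of content `m` killed by all skew derivations `∂_k` with `k ∈ S`. As `S` shrinks
from the whole alphabet to `∅`, these interpolate between the kernel of the library operators and
the full space of words of content `m`. -/
def jointKer (q : R) (S : Set α) (m : α → ℕ) : Submodule R (WordModule R α) :=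
  contentSubmodule R m ⊓ ⨅ k ∈ S, LinearMap.ker (skewDeriv q k)

-- A shortcut: without it, unification fails to see the module structure of a submodule of
-- `List α →₀ R` as one over an additive group, as required by `LinearMap.charpoly`.
instance (q : R) (S : Set α) (m : α → ℕ) : AddCommGroup (jointKer q S m) :=
  Submodule.addCommGroup _

variable {q : R} {S : Set α} {m : α → ℕ} {j : α} {v : WordModule R α}

lemma mem_jointKer :
    v ∈ jointKer q S m ↔ v ∈ contentSubmodule R m ∧ ∀ k ∈ S, skewDeriv q k v = 0 := by
  simp [jointKer]

lemma jointKer_empty (q : R) (m : α → ℕ) : jointKer q ∅ m = contentSubmodule R m := by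
  simp [jointKer]

lemma mem_jointKer_Ici :
    v ∈ jointKer q (Set.Ici j) m ↔ v ∈ jointKer q (Set.Ioi j) m ∧ skewDeriv q j v = 0 := by
  rw [mem_jointKer, ← Set.Ioi_insert, Set.forall_mem_insert, mem_jointKer]
  tauto

lemma jointKer_Ici_eq_of_content_eq_zero (q : R) (hj : m j = 0) :
    jointKer q (Set.Ici j) m = jointKer q (Set.Ioi j) m := by
  ext v
  rw [mem_jointKer_Ici, and_iff_left_of_imp]
  exact fun hv => skewDeriv_eq_zero_of_content_eq_zero q hj (mem_jointKer.1 hv).1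

lemma library_mem_jointKer (y : α → R) (hv : v ∈ jointKer q S m) :
    library q y v ∈ jointKer q S m := by
  rw [mem_jointKer] at hv ⊢
  exact ⟨library_mem_content q y hv.1, fun k hk => by simp [skewDeriv_library, hv.2 k hk]⟩

lemma skewDeriv_mem_jointKer_Ioi (hv : v ∈ jointKer q (Set.Ioi j) (m + Pi.single j 1)) :
    skewDeriv q j v ∈ jointKer q (Set.Ioi j) m := by
  rw [mem_jointKer] at hv ⊢
  exact ⟨skewDeriv_mem_content q hv.1, fun k hk => by simp [skewCommuteAt q v hk, hv.2 k hk]⟩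

lemma prepend_mem_jointKer_Ioi (hv : v ∈ jointKer q (Set.Ioi j) m) :
    prepend j v ∈ jointKer q (Set.Ioi j) (m + Pi.single j 1) := by
  rw [mem_jointKer] at hv ⊢
  exact ⟨prepend_mem_content j hv.1, fun k hk => by
    simp [skewDeriv_prepend_of_ne q (ne_of_gt hk), hv.2 k hk]⟩

lemma skewDeriv_prepend_self_of_mem_jointKer (hv : v ∈ jointKer q (Set.Ioi j) m) :
    skewDeriv q j (prepend j v) = v + q • prepend j (skewDeriv q j v) := by
  have hlib : library q ((Set.Ioi j).indicator 1) v = 0 := by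
    rw [library_indicator_apply]
    exact Finset.sum_eq_zero fun i hi => by
      rw [(mem_jointKer.1 hv).2 i (Finset.mem_filter.1 hi).2, map_zero]
  rw [skewDeriv_prepend_self, hlib, smul_zero, add_zero, add_comm]

lemma skewDeriv_mem_jointKer_Ioi_of_mem (hv : v ∈ jointKer q (Set.Ioi j) m) :
    ∃ m', skewDeriv q j v ∈ jointKer q (Set.Ioi j) m' := by
  induction m using content_induction j with
  | zero m hj =>
    exact ⟨m, by simp [skewDeriv_eq_zero_of_content_eq_zero q hj (mem_jointKer.1 hv).1]⟩
  | add_single m _ => exact ⟨m, skewDeriv_mem_jointKer_Ioi hv⟩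

lemma skewDeriv_pow_succ_prepend (r : ℕ) (hv : v ∈ jointKer q (Set.Ioi j) m) :
    (skewDeriv q j ^ (r + 1)) (prepend j v) =
      (∑ i ∈ Finset.range (r + 1), q ^ i) • (skewDeriv q j ^ r) v +
        q ^ (r + 1) • prepend j ((skewDeriv q j ^ (r + 1)) v) := by
  induction r generalizing v m with
  | zero => simpa using skewDeriv_prepend_self_of_mem_jointKer hv
  | succ r ih =>
    obtain ⟨m', hv'⟩ := skewDeriv_mem_jointKer_Ioi_of_mem hv
    have pow_apply (n : ℕ) (x : WordModule R α) :
        (skewDeriv q j ^ (n + 1)) x = (skewDeriv q j ^ n) (skewDeriv q j x) := by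
      rw [pow_succ, Module.End.mul_apply]
    rw [pow_apply (r + 1), skewDeriv_prepend_self_of_mem_jointKer hv, map_add, map_smul, ih hv',
      geom_sum_succ (n := r + 1), pow_apply r v, pow_apply (r + 1) v]
    module

end JointKernels

section Surjectivity

variable {F : Type*} [Field F] {α : Type*} [LinearOrder α] [Fintype α]

instance (q : F) (S : Set α) (m : α → ℕ) : FiniteDimensional F (jointKer q S m) :=
  inferInstanceAs <| FiniteDimensional F ↥(contentSubmodule F m ⊓ _)

instance (q : F) (S : Set α) (m : α → ℕ) : Module.Free F (jointKer q S m) :=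
  Module.Free.of_divisionRing F (jointKer q S m)

lemma exists_skewDeriv_eq_of_pow_eq_zero {q : F}
    (hq : ∀ r, ∑ i ∈ Finset.range (r + 1), q ^ i ≠ 0) {j : α} {m : α → ℕ} (r : ℕ)
    {v : WordModule F α} (hv : v ∈ jointKer q (Set.Ioi j) m) (hr : (skewDeriv q j ^ r) v = 0) :
    ∃ u ∈ jointKer q (Set.Ioi j) (m + Pi.single j 1), skewDeriv q j u = v := by
  induction r generalizing v with
  | zero => exact ⟨0, Submodule.zero_mem _, by simpa using hr.symm⟩
  | succ r ih =>
    let u₀ := (∑ i ∈ Finset.range (r + 1), q ^ i)⁻¹ • prepend j v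
    have hu₀ : u₀ ∈ jointKer q (Set.Ioi j) (m + Pi.single j 1) :=
      Submodule.smul_mem _ _ (prepend_mem_jointKer_Ioi hv)
    have hpow : (skewDeriv q j ^ r) (v - skewDeriv q j u₀) = 0 := by
      rw [map_sub, map_smul, map_smul, ← Module.End.mul_apply (skewDeriv q j ^ r), ← pow_succ,
        skewDeriv_pow_succ_prepend r hv, hr, map_zero, smul_zero, add_zero, smul_smul,
        inv_mul_cancel₀ (hq r), one_smul, sub_self]
    obtain ⟨u, hu, hDu⟩ := ih (Submodule.sub_mem _ hv (skewDeriv_mem_jointKer_Ioi hu₀)) hpow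
    exact ⟨u + u₀, Submodule.add_mem _ hu hu₀, by rw [map_add, hDu, sub_add_cancel]⟩

lemma exists_skewDeriv_eq {q : F} (hq : ∀ r, ∑ i ∈ Finset.range (r + 1), q ^ i ≠ 0) {j : α}
    {m : α → ℕ} {v : WordModule F α} (hv : v ∈ jointKer q (Set.Ioi j) m) :
    ∃ u ∈ jointKer q (Set.Ioi j) (m + Pi.single j 1), skewDeriv q j u = v :=
  exists_skewDeriv_eq_of_pow_eq_zero hq _ hv <|
    skewDeriv_pow_content_eq_zero q j m v (mem_jointKer.1 hv).1

end Surjectivity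

section ExactCharpoly

variable {R M N P : Type*} [CommRing R] [AddCommGroup M] [Module R M] [Module.Free R M]
  [Module.Finite R M] [AddCommGroup N] [Module R N] [Module.Free R N] [Module.Finite R N]
  [AddCommGroup P] [Module R P] [Module.Free R P] [Module.Finite R P]

lemma charpoly_prod_of_comp_inl_of_snd_comp {a : Module.End R (M × P)} {c : Module.End R M}
    {b : Module.End R P} (hc : a ∘ₗ LinearMap.inl R M P = LinearMap.inl R M P ∘ₗ c)
    (hb : LinearMap.snd R M P ∘ₗ a = b ∘ₗ LinearMap.snd R M P) :
    a.charpoly = c.charpoly * b.charpoly := by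
  let bM := Module.Free.chooseBasis R M
  let bP := Module.Free.chooseBasis R P
  have hc (x : M) : a (x, 0) = (c x, 0) := LinearMap.congr_fun hc x
  have hb (z : M × P) : (a z).2 = b z.2 := LinearMap.congr_fun hb z
  have hblocks : LinearMap.toMatrix (bM.prod bP) (bM.prod bP) a =
      Matrix.fromBlocks (LinearMap.toMatrix bM bM c)
        (Matrix.of fun i j => bM.repr (a (0, bP j)).1 i) 0 (LinearMap.toMatrix bP bP b) := by
    ext (i | i) (j | j) <;> simp [LinearMap.toMatrix_apply, hc, hb]
  rw [← LinearMap.charpoly_toMatrix a (bM.prod bP), hblocks,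
    Matrix.charpoly_fromBlocks_zero₂₁, LinearMap.charpoly_toMatrix, LinearMap.charpoly_toMatrix]

variable {i : M →ₗ[R] N} {f : N →ₗ[R] P}

lemma charpoly_eq_mul_of_exact (hi : Function.Injective i) (hf : Function.Surjective f)
    (hif : Function.Exact i f) {a : Module.End R N} {c : Module.End R M} {b : Module.End R P}
    (hac : a ∘ₗ i = i ∘ₗ c) (hab : f ∘ₗ a = b ∘ₗ f) :
    a.charpoly = c.charpoly * b.charpoly := by
  obtain ⟨s, hs⟩ := f.exists_rightInverse_of_surjective (LinearMap.range_eq_top.2 hf)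
  obtain ⟨e, rfl, rfl⟩ := hif.splitSurjectiveEquiv hi ⟨s, hs⟩
  rw [← e.charpoly_conj a]
  refine charpoly_prod_of_comp_inl_of_snd_comp ?_ ?_
  · ext x : 1
    simpa [LinearEquiv.conj_apply] using congr(e ($hac x))
  · refine LinearMap.ext fun z => ?_
    simpa [LinearEquiv.conj_apply] using congr($hab (e.symm z))

omit [Module.Free R N] [Module.Finite R N] in
lemma finrank_eq_add_of_exact [Nontrivial R] (hi : Function.Injective i)
    (hf : Function.Surjective f) (hif : Function.Exact i f) :
    Module.finrank R N = Module.finrank R M + Module.finrank R P := by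
  obtain ⟨s, hs⟩ := f.exists_rightInverse_of_surjective (LinearMap.range_eq_top.2 hf)
  rw [(hif.splitSurjectiveEquiv hi ⟨s, hs⟩).1.finrank_eq, Module.finrank_prod]

end ExactCharpoly

section JointKernelRecursion

variable {F : Type*} [Field F] {α : Type*} [LinearOrder α] [Fintype α] {q : F} {m : α → ℕ} {j : α}

/-- The restriction of a library operator to a joint kernel. -/
def libraryOn (q : F) (S : Set α) (m : α → ℕ) (y : α → F) : Module.End F (jointKer q S m) :=
  (library q y).restrict fun _ => library_mem_jointKer y

lemma coe_libraryOn_apply (q : F) (S : Set α) (m : α → ℕ) (y : α → F) (v : jointKer q S m) :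
    (libraryOn q S m y v : WordModule F α) = library q y v :=
  rfl

/-- The restriction of `∂_j` to `⋂_{k > j} ker ∂_k`. -/
def skewDerivOn (q : F) (j : α) (m : α → ℕ) :
    jointKer q (Set.Ioi j) (m + Pi.single j 1) →ₗ[F] jointKer q (Set.Ioi j) m :=
  (skewDeriv q j).restrict fun _ => skewDeriv_mem_jointKer_Ioi

lemma jointKer_Ici_le_Ioi (q : F) (j : α) (m : α → ℕ) :
    jointKer q (Set.Ici j) m ≤ jointKer q (Set.Ioi j) m :=
  fun _ hv => (mem_jointKer_Ici.1 hv).1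

lemma skewDerivOn_surjective (hq : ∀ r, ∑ i ∈ Finset.range (r + 1), q ^ i ≠ 0) (j : α)
    (m : α → ℕ) : Function.Surjective (skewDerivOn q j m) := by
  rintro ⟨v, hv⟩
  obtain ⟨u, hu, rfl⟩ := exists_skewDeriv_eq hq hv
  exact ⟨⟨u, hu⟩, rfl⟩

lemma exact_inclusion_skewDerivOn (q : F) (j : α) (m : α → ℕ) :
    Function.Exact (Submodule.inclusion (jointKer_Ici_le_Ioi q j (m + Pi.single j 1)))
      (skewDerivOn q j m) := by
  rintro ⟨v, hv⟩
  have hker : skewDerivOn q j m ⟨v, hv⟩ = 0 ↔ skewDeriv q j v = 0 := Subtype.ext_iff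
  rw [hker]
  constructor
  · exact fun h => ⟨⟨v, mem_jointKer_Ici.2 ⟨hv, h⟩⟩, rfl⟩
  · rintro ⟨⟨u, hu⟩, hinc⟩
    obtain rfl : u = v := congrArg Subtype.val hinc
    exact (mem_jointKer_Ici.1 hu).2

lemma libraryOn_comp_inclusion (j : α) (m : α → ℕ) (y : α → F) :
    libraryOn q (Set.Ioi j) m y ∘ₗ Submodule.inclusion (jointKer_Ici_le_Ioi q j m) =
      Submodule.inclusion (jointKer_Ici_le_Ioi q j m) ∘ₗ libraryOn q (Set.Ici j) m y :=
  LinearMap.ext fun v => Subtype.ext <| by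
    rw [LinearMap.comp_apply, LinearMap.comp_apply, coe_libraryOn_apply,
      Submodule.coe_inclusion, Submodule.coe_inclusion, coe_libraryOn_apply]

lemma finrank_jointKer_Ioi (hq : ∀ r, ∑ i ∈ Finset.range (r + 1), q ^ i ≠ 0) (j : α)
    (m : α → ℕ) :
    Module.finrank F (jointKer q (Set.Ioi j) (m + Pi.single j 1)) =
      Module.finrank F (jointKer q (Set.Ici j) (m + Pi.single j 1)) +
        Module.finrank F (jointKer q (Set.Ioi j) m) :=
  finrank_eq_add_of_exact (Submodule.inclusion_injective _) (skewDerivOn_surjective hq j m)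
    (exact_inclusion_skewDerivOn q j m)

lemma charpoly_libraryOn_Ioi (hq : ∀ r, ∑ i ∈ Finset.range (r + 1), q ^ i ≠ 0) (j : α)
    (m : α → ℕ) (y : α → F) :
    (libraryOn q (Set.Ioi j) (m + Pi.single j 1) y).charpoly =
      (libraryOn q (Set.Ici j) (m + Pi.single j 1) y).charpoly *
        (libraryOn q (Set.Ioi j) m (shiftWeights q j y)).charpoly.comp
          (Polynomial.X - Polynomial.C (y j)) := by
  rw [sub_eq_add_neg, ← Polynomial.C_neg, ← LinearMap.charpoly_sub_smul]
  refine charpoly_eq_mul_of_exact (Submodule.inclusion_injective _)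
    (skewDerivOn_surjective hq j m) (exact_inclusion_skewDerivOn q j m)
    (libraryOn_comp_inclusion j _ y) ?_
  ext v : 2
  simp [skewDerivOn, libraryOn, LinearMap.restrict_apply, skewDeriv_library, add_comm]

lemma libraryOn_univ (q : F) (m : α → ℕ) (y : α → F) : libraryOn q Set.univ m y = 0 := by
  ext v : 2
  simp [libraryOn, LinearMap.restrict_apply, library_apply, (mem_jointKer.1 v.2).2]

end JointKernelRecursion

section Eigenvalues

variable {R : Type*} [CommRing R] {α : Type*} [LinearOrder α] [Fintype α]

/-- The eigenvalue `∑_j y_j q^{a_{j+1} + ⋯ + a_ℓ} [a_j]_q` of `library q y` attached to the weak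
composition `a`. -/
def eigenvalue (q : R) (y : α → R) (a : α → ℕ) : R :=
  ∑ j, y j * (q ^ (∑ t with j < t, a t) * ∑ r ∈ Finset.range (a j), q ^ r)

lemma pow_sum_Ioi_eq (q : R) (a : α → ℕ) (k : α) :
    q ^ (∑ t with k < t, a t) =
      1 + (q - 1) * ∑ j with k < j,
        (q ^ (∑ t with j < t, a t) * ∑ r ∈ Finset.range (a j), q ^ r) := by
  have htel := Finset.prod_sub_ordered {t | k < t} (fun t => q ^ a t) fun t => q ^ a t - 1
  simp only [sub_sub_cancel, Finset.prod_const_one, mul_one, Finset.prod_pow_eq_pow_sum] at htel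
  rw [eq_sub_iff_add_eq] at htel
  rw [← htel]
  congr 1
  rw [Finset.mul_sum]
  refine Finset.sum_congr rfl fun j hj => ?_
  have hfilter : Finset.filter (fun t => j < t) {t | k < t} = ({t | j < t} : Finset α) := by
    ext t
    simpa using (Finset.mem_filter.1 hj).2.trans
  rw [hfilter, ← mul_geom_sum]
  ring

lemma eigenvalue_add_single (q : R) (y : α → R) (a : α → ℕ) (k : α) :
    eigenvalue q y (a + Pi.single k 1) = y k + eigenvalue q (shiftWeights q k y) a := by
  let term (j : α) : R := q ^ (∑ t with j < t, a t) * ∑ r ∈ Finset.range (a j), q ^ r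
  have hexp (j : α) : ∑ t with j < t, (a + Pi.single k 1 : α → ℕ) t =
      ∑ t with j < t, a t + if j < k then 1 else 0 := by
    simp [Finset.sum_add_distrib]
  have hterm (j : α) : y j * (q ^ (∑ t with j < t, (a + Pi.single k 1 : α → ℕ) t) *
        ∑ r ∈ Finset.range ((a + Pi.single k 1 : α → ℕ) j), q ^ r) =
      shiftWeights q k y j * term j +
        ((if j = k then y k * q ^ (∑ t with k < t, a t) else 0) -
          y k * if k < j then (q - 1) * term j else 0) := by
    rw [hexp]
    rcases lt_trichotomy j k with h | rfl | h
    · simp [shiftWeights, term, h, h.not_gt, h.ne, pow_succ]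
      ring
    · simp [shiftWeights, term, geom_sum_succ]
      ring
    · simp [shiftWeights, term, h, h.not_gt, h.ne']
      ring
  simp only [eigenvalue, hterm, Finset.sum_add_distrib, Finset.sum_sub_distrib,
    Finset.sum_ite_eq', Finset.mem_univ, if_true, ← Finset.mul_sum, ← Finset.sum_filter]
  rw [pow_sum_Ioi_eq]
  ring

end Eigenvalues

section CharpolyProduct

lemma upperSet_induction {α : Type*} [LinearOrder α] [Finite α] {P : Set α → Prop}
    (univ : P Set.univ) (Ioi_of_Ici : ∀ j, P (Set.Ici j) → P (Set.Ioi j)) : P ∅ := by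
  have hIci (j : α) : P (Set.Ici j) := by
    induction j using WellFoundedLT.induction with
    | ind j ih =>
      by_cases hj : IsMin j
      · rwa [hj.isBot.Ici_eq]
      · obtain ⟨i, hij⟩ := exists_covBy_of_wellFoundedGT hj
        exact hij.Ioi_eq ▸ Ioi_of_Ici i (ih i hij.lt)
  cases isEmpty_or_nonempty α
  · rwa [Set.eq_empty_of_isEmpty Set.univ] at univ
  · obtain ⟨j, hj⟩ := Finite.exists_max (id : α → α)
    exact (Set.Ioi_eq_empty_iff.2 fun i _ => hj i) ▸ Ioi_of_Ici j (hIci j)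

variable {α : Type*} [LinearOrder α] [Fintype α]

/-- The weak compositions `a ≤ m` that vanish on `S`. -/
def compositionsOff (S : Set α) (m : α → ℕ) : Finset (α → ℕ) :=
  {a ∈ Finset.Iic m | ∀ k ∈ S, a k = 0}

variable {S : Set α} {m a : α → ℕ} {j : α}

lemma mem_compositionsOff : a ∈ compositionsOff S m ↔ a ≤ m ∧ ∀ k ∈ S, a k = 0 := by
  simp [compositionsOff]

lemma compositionsOff_univ (m : α → ℕ) : compositionsOff Set.univ m = {0} := by
  ext a
  simp only [mem_compositionsOff, Set.mem_univ, forall_true_left, Finset.mem_singleton,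
    funext_iff, Pi.zero_apply]
  exact ⟨And.right, fun h => ⟨fun k => by simp [h k], h⟩⟩

lemma compositionsOff_empty (m : α → ℕ) : compositionsOff ∅ m = Finset.Iic m := by
  simp [compositionsOff]

lemma compositionsOff_Ici_eq_filter (j : α) (m : α → ℕ) :
    compositionsOff (Set.Ici j) m = {a ∈ compositionsOff (Set.Ioi j) m | a j = 0} := by
  ext a
  rw [Finset.mem_filter, mem_compositionsOff, mem_compositionsOff, ← Set.Ioi_insert,
    Set.forall_mem_insert]
  tauto

lemma compositionsOff_Ici_of_eq_zero (hj : m j = 0) :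
    compositionsOff (Set.Ici j) m = compositionsOff (Set.Ioi j) m := by
  rw [compositionsOff_Ici_eq_filter, Finset.filter_eq_self]
  exact fun a ha => Nat.le_zero.1 (hj ▸ (mem_compositionsOff.1 ha).1 j)

lemma image_add_single_compositionsOff (j : α) (m : α → ℕ) :
    (compositionsOff (Set.Ioi j) m).image (· + Pi.single j 1) =
      {a ∈ compositionsOff (Set.Ioi j) (m + Pi.single j 1) | a j ≠ 0} := by
  ext a
  simp only [Finset.mem_image, Finset.mem_filter, mem_compositionsOff]
  constructor
  · rintro ⟨b, ⟨hbm, hb⟩, rfl⟩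
    exact ⟨⟨add_le_add_left hbm _, fun k hk => by simp [hb k hk, (Set.mem_Ioi.1 hk).ne']⟩,
      by simp⟩
  · rintro ⟨⟨ham, ha⟩, haj⟩
    have hsingle : Pi.single j 1 ≤ a :=
      update_le_iff.2 ⟨Nat.one_le_iff_ne_zero.2 haj, fun _ _ => Nat.zero_le _⟩
    exact ⟨a - Pi.single j 1, ⟨tsub_le_iff_right.2 ham, fun k hk => by simp [ha k hk]⟩,
      tsub_add_cancel_of_le hsingle⟩

lemma prod_compositionsOff_Ioi {M : Type*} [CommMonoid M] (f : (α → ℕ) → M) (j : α)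
    (m : α → ℕ) :
    ∏ a ∈ compositionsOff (Set.Ioi j) (m + Pi.single j 1), f a =
      (∏ a ∈ compositionsOff (Set.Ici j) (m + Pi.single j 1), f a) *
        ∏ a ∈ compositionsOff (Set.Ioi j) m, f (a + Pi.single j 1) := by
  rw [← Finset.prod_filter_mul_prod_filter_not _ (fun a => a j = 0),
    compositionsOff_Ici_eq_filter, ← image_add_single_compositionsOff,
    Finset.prod_image (add_left_injective _).injOn]

lemma charpoly_libraryOn_Ioi_of_eq_zero {F : Type*} [Field F] (q : F) (y : α → F)
    (hj : m j = 0) :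
    (libraryOn q (Set.Ioi j) m y).charpoly = (libraryOn q (Set.Ici j) m y).charpoly := by
  rw [← (LinearEquiv.ofEq _ _ (jointKer_Ici_eq_of_content_eq_zero q hj)).charpoly_conj]
  refine congrArg LinearMap.charpoly <| LinearMap.ext fun v => Subtype.ext ?_
  rw [LinearEquiv.conj_apply_apply, LinearEquiv.coe_ofEq_apply, coe_libraryOn_apply,
    coe_libraryOn_apply, LinearEquiv.ofEq_symm, LinearEquiv.coe_ofEq_apply]

open Polynomial in
lemma charpoly_libraryOn_empty {F : Type*} [Field F] {q : F}
    (hq : ∀ r, ∑ i ∈ Finset.range (r + 1), q ^ i ≠ 0) {d : (α → ℕ) → ℕ}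
    (hd : ∀ m, Module.finrank F (jointKer q Set.univ m) = d m) (m : α → ℕ) (y : α → F) :
    (libraryOn q ∅ m y).charpoly =
      ∏ a ∈ Finset.Iic m, (X - C (eigenvalue q y a)) ^ d (m - a) := by
  rw [← compositionsOff_empty]
  revert m y
  refine upperSet_induction (P := fun S : Set α => ∀ m y, (libraryOn q S m y).charpoly =
    ∏ a ∈ compositionsOff S m, (X - C (eigenvalue q y a)) ^ d (m - a)) ?_ ?_
  · intro m y
    simp [compositionsOff_univ, libraryOn_univ, LinearMap.charpoly_zero, eigenvalue, hd]
  intro j hIci m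
  induction m using content_induction j with
  | zero m hj =>
    intro y
    rw [charpoly_libraryOn_Ioi_of_eq_zero q y hj, hIci, compositionsOff_Ici_of_eq_zero hj]
  | add_single m ih =>
    intro y
    rw [charpoly_libraryOn_Ioi hq, hIci, ih, prod_compositionsOff_Ioi, prod_comp]
    simp [eigenvalue_add_single, sub_sub, add_tsub_add_eq_tsub_right]

end CharpolyProduct

section FiberMonoPerms

open scoped Finset

variable {α : Type*} {N : ℕ}

/-- The permutations of `{0, …, N - 1}` that are increasing on the fibres of `β` and have no fixed
points over `S`. If `β` sends each label to its chain in a disjoint union of chains, then for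
`S = Set.univ` these are the inverses of the poset derangements. -/
def fiberMonoPerms (β : Fin N → α) (S : Set α) : Finset (Equiv.Perm (Fin N)) :=
  {p | (∀ a b, a < b → β a = β b → p a < p b) ∧ ∀ a, β a ∈ S → p a ≠ a}

variable {β : Fin N → α} {S : Set α}

lemma mem_fiberMonoPerms {p : Equiv.Perm (Fin N)} : p ∈ fiberMonoPerms β S ↔
    (∀ a b, a < b → β a = β b → p a < p b) ∧ ∀ a, β a ∈ S → p a ≠ a := by
  simp [fiberMonoPerms]

lemma mem_fiberMonoPerms_insert {j : α} {p : Equiv.Perm (Fin N)} :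
    p ∈ fiberMonoPerms β (insert j S) ↔
      p ∈ fiberMonoPerms β S ∧ ∀ a, β a = j → p a ≠ a := by
  simp only [mem_fiberMonoPerms, Set.mem_insert_iff, or_imp, forall_and]
  tauto

lemma fiberMonoPerms_insert_of_notMem_range {j : α} (hj : j ∉ Set.range β) :
    fiberMonoPerms β (insert j S) = fiberMonoPerms β S := by
  ext p
  rw [mem_fiberMonoPerms_insert, and_iff_left]
  exact fun a ha => (hj ⟨a, ha⟩).elim

/-- The permutation fixing `v` and acting as `p` on the other labels. -/
def insertFixed (v : Fin (N + 1)) (p : Equiv.Perm (Fin N)) : Equiv.Perm (Fin (N + 1)) :=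
  p.extendDomain (finSuccAboveEquiv v)

@[simp]
lemma insertFixed_self (v : Fin (N + 1)) (p : Equiv.Perm (Fin N)) : insertFixed v p v = v :=
  Equiv.Perm.extendDomain_apply_not_subtype _ _ (by simp)

@[simp]
lemma insertFixed_succAbove (v : Fin (N + 1)) (p : Equiv.Perm (Fin N)) (k : Fin N) :
    insertFixed v p (v.succAbove k) = v.succAbove (p k) :=
  Equiv.Perm.extendDomain_apply_image p (finSuccAboveEquiv v) k

lemma insertFixed_injective (v : Fin (N + 1)) : Function.Injective (insertFixed v) := by
  intro p p' h
  ext1 k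
  simpa using congr($h (v.succAbove k))

lemma exists_insertFixed_eq {v : Fin (N + 1)} {g : Equiv.Perm (Fin (N + 1))} (hv : g v = v) :
    ∃ p, insertFixed v p = g := by
  have hne (x : Fin (N + 1)) : g x ≠ v ↔ x ≠ v := (g.injective.eq_iff' hv).not
  refine ⟨(finSuccAboveEquiv v).permCongr.symm (g.subtypePerm hne), ?_⟩
  ext1 x
  cases x using v.succAboveCases with
  | x => simp [hv]
  | p k =>
    have hk := congrArg Subtype.val <| (finSuccAboveEquiv v).apply_symm_apply
      (g.subtypePerm hne (finSuccAboveEquiv v k))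
    rw [insertFixed_succAbove]
    exact hk

variable [LinearOrder α]

lemma comp_succAbove_eq_of_monotone {β : Fin (N + 1) → α} (hβ : Monotone β)
    {v v' : Fin (N + 1)} (h : β v = β v') : β ∘ v.succAbove = β ∘ v'.succAbove := by
  wlog hvv' : v ≤ v' generalizing v v'
  · exact (this h.symm (le_of_not_ge hvv')).symm
  funext k
  rcases lt_or_ge k.castSucc v with hk | hk
  · simp [Fin.succAbove_of_castSucc_lt, hk, hk.trans_le hvv']
  rcases lt_or_ge k.castSucc v' with hk' | hk'
  · have hsucc : k.succ ≤ v' := Fin.castSucc_lt_iff_succ_le.1 hk'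
    simp only [Function.comp_apply, Fin.succAbove_of_le_castSucc _ _ hk,
      Fin.succAbove_of_castSucc_lt _ _ hk']
    exact le_antisymm ((hβ hsucc).trans (h.symm.trans_le (hβ hk))) (hβ k.castSucc_le_succ)
  · simp [Fin.succAbove_of_le_castSucc, hk, hk']

lemma apply_add_le_of_mem_fiberMonoPerms (hβ : Monotone β) {p : Equiv.Perm (Fin N)}
    (hp : p ∈ fiberMonoPerms β S) {a b : Fin N} (hab : a ≤ b) (h : β a = β b) :
    (p a : ℕ) + b ≤ p b + a := by
  obtain ⟨b, hb⟩ := b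
  replace hab : (a : ℕ) ≤ b := hab
  induction b, hab using Nat.le_induction with
  | base => rfl
  | succ c hac ih =>
    have hc : c < N := by omega
    have hlast : β ⟨c, hc⟩ = β ⟨c + 1, hb⟩ :=
      le_antisymm (hβ (Fin.mk_le_mk.2 c.le_succ)) (h ▸ hβ (Fin.le_def.2 hac))
    have := ih hc (h.trans hlast.symm)
    have : (p ⟨c, hc⟩ : ℕ) < p ⟨c + 1, hb⟩ :=
      (mem_fiberMonoPerms.1 hp).1 _ _ (Fin.mk_lt_mk.2 c.lt_succ_self) hlast
    dsimp only at *
    omega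

variable {β : Fin (N + 1) → α} {v v' : Fin (N + 1)} {p : Equiv.Perm (Fin N)}

/-- `v` is the place at which `p` may receive a fixed point `v` that becomes the greatest fixed
point over `β v`: along a fibre of `β`, the labels `k` with `p k ≤ k` precede those with
`k < p k`, and `v` separates them. -/
def Separates (β : Fin (N + 1) → α) (v : Fin (N + 1)) (p : Equiv.Perm (Fin N)) : Prop :=
  ∀ k, β (v.succAbove k) = β v → (k.castSucc < v ↔ p k ≤ k)

lemma Separates.eq_of_le (hβ : Monotone β) (hv : Separates β v p) (hv' : Separates β v' p)
    (h : β v = β v') (hle : v ≤ v') : v = v' := by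
  by_contra hne
  have hlt : v < v' := lt_of_le_of_ne hle hne
  obtain ⟨k, rfl⟩ := Fin.exists_castSucc_eq.2 (hlt.trans_le v'.le_last).ne
  have hk : v'.succAbove k = k.castSucc := Fin.succAbove_of_castSucc_lt _ _ hlt
  have hpk : p k ≤ k := (hv' k (by rw [hk, h])).1 hlt
  refine lt_irrefl _ ((hv k ?_).2 hpk)
  rw [← Function.comp_apply (f := β), comp_succAbove_eq_of_monotone hβ h, Function.comp_apply, hk]

lemma Separates.eq (hβ : Monotone β) (hv : Separates β v p) (hv' : Separates β v' p)
    (h : β v = β v') : v = v' :=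
  (le_total v v').elim (hv.eq_of_le hβ hv' h) fun hle =>
    (hv'.eq_of_le hβ hv h.symm hle).symm

lemma exists_separates (hβ : Monotone β) (hp : p ∈ fiberMonoPerms (β ∘ v.succAbove) S) :
    ∃ v', β v' = β v ∧ Separates β v' p := by
  let T : Set (Fin (N + 1)) :=
    {v' | β v' = β v ∧ ∀ k, β (v.succAbove k) = β v → p k ≤ k → k.castSucc < v'}
  have hT : T.Nonempty := by
    obtain ⟨e, he, hmax⟩ :=
      Finset.exists_max_image {x | β x = β v} id ⟨v, by simp⟩
    simp only [Finset.mem_filter_univ, id] at he hmax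
    refine ⟨e, he, fun k hk _ => ?_⟩
    rw [← Function.comp_apply (f := β), ← comp_succAbove_eq_of_monotone hβ he] at hk
    exact (Fin.succAbove_lt_iff_castSucc_lt e k).1 <|
      lt_of_le_of_ne (hmax _ hk) (Fin.succAbove_ne e k)
  obtain ⟨v', ⟨hv', hlt⟩, hmin⟩ := wellFounded_lt.has_min T hT
  have hcomp := comp_succAbove_eq_of_monotone hβ hv'
  refine ⟨v', hv', fun k hk => ⟨fun hkv => ?_, fun hpk => hlt k ?_ hpk⟩⟩
  · by_contra! hpk
    have hkβ : β k.castSucc = β v := by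
      rw [← hv', ← hk, Fin.succAbove_of_castSucc_lt _ _ hkv]
    refine hmin k.castSucc ⟨hkβ, fun i hi hpi => ?_⟩ hkv
    rw [Fin.castSucc_lt_castSucc_iff]
    by_contra! hki
    have hβi : (β ∘ v.succAbove) k = (β ∘ v.succAbove) i := by
      rw [← hcomp, Function.comp_apply, hk, hv', hcomp, Function.comp_apply, hi]
    have := apply_add_le_of_mem_fiberMonoPerms
      (hβ.comp (Fin.strictMono_succAbove v).monotone) hp hki hβi
    omega
  · rw [← Function.comp_apply (f := β), ← hcomp, Function.comp_apply, hk, hv']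

omit [LinearOrder α] in
lemma insertFixed_mem_fiberMonoPerms_iff (hv : β v ∉ S) :
    insertFixed v p ∈ fiberMonoPerms β S ↔ p ∈ fiberMonoPerms (β ∘ v.succAbove) S ∧
      ∀ k, β (v.succAbove k) = β v → (k.castSucc < v ↔ (p k).castSucc < v) := by
  simp only [mem_fiberMonoPerms, Fin.forall_iff_succAbove v, insertFixed_self,
    insertFixed_succAbove, Function.comp_apply, Fin.lt_succAbove_iff_le_castSucc,
    Fin.succAbove_lt_iff_castSucc_lt, Fin.succAbove_right_injective.ne_iff,
    (Fin.strictMono_succAbove v).lt_iff_lt, hv, lt_irrefl, false_imp_iff, true_and,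
    forall_and, eq_comm (a := β v)]
  grind

lemma apply_le_self_of_castSucc_lt (hβ : Monotone β)
    (hp : p ∈ fiberMonoPerms (β ∘ v.succAbove) S)
    (hlt : ∀ k, β (v.succAbove k) = β v → k.castSucc < v → (p k).castSucc < v) {k : Fin N}
    (hk : β (v.succAbove k) = β v) (hkv : k.castSucc < v) : p k ≤ k := by
  obtain ⟨e, rfl⟩ := Fin.exists_succ_eq.2 (Fin.ne_zero_of_lt hkv)
  have hke : k ≤ e := Fin.castSucc_lt_succ_iff.1 hkv
  have he : β (e.succ.succAbove e) = β e.succ := by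
    refine le_antisymm (hβ (Fin.succAbove_lt_iff_castSucc_lt _ _ |>.2 e.castSucc_lt_succ).le) ?_
    exact hk.symm.trans_le (hβ ((Fin.strictMono_succAbove _).monotone hke))
  have hpe : p e ≤ e := Fin.castSucc_lt_succ_iff.1 (hlt e he e.castSucc_lt_succ)
  have := apply_add_le_of_mem_fiberMonoPerms
    (hβ.comp (Fin.strictMono_succAbove _).monotone) hp hke (hk.trans he.symm)
  omega

lemma self_le_apply_of_le_castSucc (hβ : Monotone β)
    (hp : p ∈ fiberMonoPerms (β ∘ v.succAbove) S)
    (hle : ∀ k, β (v.succAbove k) = β v → v ≤ k.castSucc → v ≤ (p k).castSucc) {k : Fin N}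
    (hk : β (v.succAbove k) = β v) (hvk : v ≤ k.castSucc) : k ≤ p k := by
  obtain ⟨e, rfl⟩ := Fin.exists_castSucc_eq.2 (hvk.trans_lt k.castSucc_lt_last).ne
  have hek : e ≤ k := Fin.castSucc_le_castSucc_iff.1 hvk
  have he : β (e.castSucc.succAbove e) = β e.castSucc := by
    refine le_antisymm ((hβ ((Fin.strictMono_succAbove _).monotone hek)).trans_eq hk) ?_
    exact hβ (Fin.lt_succAbove_iff_le_castSucc _ _ |>.2 le_rfl).le
  have hpe : e ≤ p e := Fin.castSucc_le_castSucc_iff.1 (hle e he le_rfl)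
  have := apply_add_le_of_mem_fiberMonoPerms
    (hβ.comp (Fin.strictMono_succAbove _).monotone) hp hek (he.trans hk.symm)
  omega

lemma insertFixed_separates_iff (hβ : Monotone β) (hv : β v ∉ S) :
    (insertFixed v p ∈ fiberMonoPerms β S ∧
        ∀ a, v < a → β a = β v → insertFixed v p a ≠ a) ↔
      p ∈ fiberMonoPerms (β ∘ v.succAbove) S ∧ Separates β v p := by
  rw [insertFixed_mem_fiberMonoPerms_iff hv, and_assoc, and_congr_right_iff]
  intro hp
  simp only [Fin.forall_iff_succAbove v, insertFixed_succAbove, lt_irrefl,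
    false_imp_iff, true_and, Fin.lt_succAbove_iff_le_castSucc,
    Fin.succAbove_right_injective.ne_iff]
  constructor
  · rintro ⟨hiff, hne⟩ k hk
    refine ⟨apply_le_self_of_castSucc_lt hβ hp (fun i hi => (hiff i hi).1) hk, fun hpk => ?_⟩
    by_contra! hvk
    have hle : k ≤ p k := self_le_apply_of_le_castSucc hβ hp
      (fun i hi => by simpa using mt (hiff i hi).2) hk hvk
    exact hne k hvk hk (le_antisymm hpk hle)
  · refine fun hsep => ⟨fun k hk => ⟨fun hkv => ?_, fun hpkv => ?_⟩, fun k hvk hk hpk =>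
      hvk.not_gt ((hsep k hk).2 hpk.le)⟩
    · exact (Fin.castSucc_le_castSucc_iff.2 ((hsep k hk).1 hkv)).trans_lt hkv
    · by_contra! hvk
      have hkp : k < p k := not_le.1 fun hpk => hvk.not_gt ((hsep k hk).2 hpk)
      exact (hvk.trans (Fin.castSucc_le_castSucc_iff.2 hkp.le)).not_gt hpkv

lemma exists_last_fixed {g : Equiv.Perm (Fin N)} {β : Fin N → α} {j : α}
    (h : ∃ a, β a = j ∧ g a = a) :
    ∃ v, β v = j ∧ g v = v ∧ ∀ a, v < a → β a = j → g a ≠ a := by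
  obtain ⟨v, hv, hmax⟩ := Finset.exists_max_image {x | β x = j ∧ g x = x} id
    (by simpa [Finset.Nonempty] using h)
  simp only [Finset.mem_filter_univ, id] at hv hmax
  exact ⟨v, hv.1, hv.2, fun a hva ha hga => hva.not_ge (hmax a ⟨ha, hga⟩)⟩

lemma card_filter_exists_fixed (hβ : Monotone β) (hv : β v ∉ S) :
    #{g ∈ fiberMonoPerms β S | ∃ a, β a = β v ∧ g a = a} =
      #(fiberMonoPerms (β ∘ v.succAbove) S) := by
  symm
  have hspec (p : Equiv.Perm (Fin N)) (hp : p ∈ fiberMonoPerms (β ∘ v.succAbove) S) :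
      ∃ v', β v' = β v ∧ Separates β v' p ∧ insertFixed v' p ∈ fiberMonoPerms β S ∧
        ∀ a, v' < a → β a = β v → insertFixed v' p a ≠ a := by
    obtain ⟨v', hv', hsep⟩ := exists_separates hβ hp
    have hins := (insertFixed_separates_iff hβ (hv' ▸ hv)).2
      ⟨comp_succAbove_eq_of_monotone hβ hv' ▸ hp, hsep⟩
    exact ⟨v', hv', hsep, hins.1, hv' ▸ hins.2⟩
  choose place hplace hsep hmem hlast using hspec
  refine Finset.card_bij (fun p hp => insertFixed (place p hp) p) ?_ ?_ ?_
  · exact fun p hp => Finset.mem_filter.2 ⟨hmem p hp, _, hplace p hp, insertFixed_self _ _⟩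
  · intro p hp p' hp' heq
    have hle {p p'} (hp) (hp') (heq : insertFixed (place p hp) p = insertFixed (place p' hp') p') :
        place p hp ≤ place p' hp' := by
      by_contra! hlt
      exact hlast p' hp' _ hlt (hplace p hp) (heq ▸ insertFixed_self _ _)
    rw [(hle hp hp' heq).antisymm (hle hp' hp heq.symm)] at heq
    exact insertFixed_injective _ heq
  · intro g hg
    obtain ⟨hg, hfix⟩ := Finset.mem_filter.1 hg
    obtain ⟨v', hv', hgv', hgt⟩ := exists_last_fixed hfix
    obtain ⟨p, rfl⟩ := exists_insertFixed_eq hgv'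
    obtain ⟨hp, hsep'⟩ := (insertFixed_separates_iff hβ (hv' ▸ hv)).1 ⟨hg, hv' ▸ hgt⟩
    rw [comp_succAbove_eq_of_monotone hβ hv'] at hp
    exact ⟨p, hp, by rw [(hsep p hp).eq hβ hsep' ((hplace p hp).trans hv'.symm)]⟩

lemma card_fiberMonoPerms (hβ : Monotone β) (hv : β v ∉ S) :
    #(fiberMonoPerms β S) = #(fiberMonoPerms β (insert (β v) S)) +
      #(fiberMonoPerms (β ∘ v.succAbove) S) := by
  have hinsert : fiberMonoPerms β (insert (β v) S) =
      {g ∈ fiberMonoPerms β S | ¬∃ a, β a = β v ∧ g a = a} := by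
    ext g
    rw [Finset.mem_filter, mem_fiberMonoPerms_insert]
    push Not
    rfl
  rw [hinsert, ← card_filter_exists_fixed hβ hv]
  exact (Finset.card_filter_add_card_filter_not _).symm.trans (add_comm _ _)

end FiberMonoPerms

section WordBasis

variable {N l : ℕ} {m : Fin l → ℕ}

lemma count_ofFn (w : Fin N → Fin l) (j : Fin l) :
    (List.ofFn w).count j = (Finset.univ.filter fun i => w i = j).card := by
  rw [← Multiset.coe_count, ← Fin.univ_val_map, Multiset.count_map, Finset.card_def,
    Finset.filter_val]
  simp only [eq_comm]

/-- The words of content `m` as functions on positions and as lists. -/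
def wordsEquivList (hm : ∑ j, m j = N) :
    Words N l m ≃ {w : List (Fin l) | ∀ j, w.count j = m j} :=
  Equiv.ofBijective (fun w => ⟨List.ofFn w.1, fun j => (count_ofFn w.1 j).trans (w.2 j)⟩) <| by
    refine ⟨fun w w' h => Subtype.ext (List.ofFn_injective (congrArg Subtype.val h)), ?_⟩
    rintro ⟨w, hw⟩
    obtain rfl : w.length = N := (length_eq_sum_of_count_eq hw).trans hm
    exact ⟨⟨w.get, fun j => by rw [← count_ofFn, List.ofFn_get, hw j]⟩,
      Subtype.ext (List.ofFn_get w)⟩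

/-- The basis of `contentSubmodule R m` consisting of the words of content `m`. -/
def contentBasis (R : Type*) [CommRing R] (hm : ∑ j, m j = N) :
    Module.Basis (Words N l m) R (contentSubmodule R m) :=
  (Module.Basis.ofRepr (Finsupp.supportedEquivFinsupp _)).reindex (wordsEquivList hm).symm

lemma coe_contentBasis (R : Type*) [CommRing R] (hm : ∑ j, m j = N) (w : Words N l m) :
    (contentBasis R hm w : WordModule R (Fin l)) = Finsupp.single (List.ofFn w.1) 1 :=
  (congrArg Subtype.val <| Module.Basis.reindex_apply
    (.ofRepr (Finsupp.supportedEquivFinsupp _)) (wordsEquivList hm).symm w).trans <|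
      Finsupp.supportedEquivFinsupp_symm_single _ (wordsEquivList hm w) (1 : R)

end WordBasis

section JointKernelDimension

variable {F : Type*} [Field F] {q : F} {N l : ℕ} {m : Fin l → ℕ} {β : Fin N → Fin l}

lemma eq_of_monotone_of_card_filter_eq {w : Fin N → Fin l} (hβ : Monotone β) (hw : Monotone w)
    (h : ∀ j, (Finset.univ.filter fun i => w i = j).card =
      (Finset.univ.filter fun i => β i = j).card) : w = β :=
  List.ofFn_injective <| List.Perm.eq_of_sortedLE (List.sortedLE_ofFn_iff.2 hw)
    (List.sortedLE_ofFn_iff.2 hβ) <| List.perm_iff_count.2 fun j => by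
      rw [count_ofFn, count_ofFn, h]

lemma sum_eq_of_card_filter_eq (h : ∀ j, (Finset.univ.filter fun i => β i = j).card = m j) :
    ∑ j, m j = N := by
  rw [← length_eq_sum_of_count_eq fun j => (count_ofFn β j).trans (h j), List.length_ofFn]

lemma card_filter_comp_perm (w : Fin N → Fin l) (p : Equiv.Perm (Fin N)) (j : Fin l) :
    (Finset.univ.filter fun i => (w ∘ p) i = j).card =
      (Finset.univ.filter fun i => w i = j).card := by
  rw [← count_ofFn, ← count_ofFn, (p.ofFn_comp_perm w).count_eq]

lemma sort_comp_symm_of_mem_fiberMonoPerms (hβ : Monotone β) {S : Set (Fin l)}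
    {p : Equiv.Perm (Fin N)} (hp : p ∈ fiberMonoPerms β S) : Tuple.sort (β ∘ p.symm) = p := by
  refine (Tuple.eq_sort_iff.2 ?_).symm
  simpa [Function.comp_assoc] using ⟨hβ, (mem_fiberMonoPerms.1 hp).1⟩

lemma card_fiberMonoPerms_empty (hβ : Monotone β)
    (h : ∀ j, (Finset.univ.filter fun i => β i = j).card = m j) :
    (fiberMonoPerms β ∅).card = Fintype.card (Words N l m) := by
  refine Finset.card_bij (fun p _ => ⟨β ∘ p.symm, fun j => ?_⟩) (fun p _ => Finset.mem_univ _)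
    (fun p hp p' hp' heq => ?_) fun w _ => ?_
  · exact (card_filter_comp_perm β p.symm j).trans (h j)
  · have heq : β ∘ p.symm = β ∘ p'.symm := congrArg Subtype.val heq
    rw [← sort_comp_symm_of_mem_fiberMonoPerms hβ hp, heq,
      sort_comp_symm_of_mem_fiberMonoPerms hβ hp']
  · have hsort : w.1 ∘ Tuple.sort w.1 = β :=
      eq_of_monotone_of_card_filter_eq hβ (Tuple.monotone_sort w.1) fun j => by
        rw [card_filter_comp_perm, w.2 j, h j]
    refine ⟨Tuple.sort w.1, mem_fiberMonoPerms.2 ⟨?_, by simp⟩, Subtype.ext ?_⟩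
    · exact hsort ▸ (Tuple.eq_sort_iff.1 rfl).2
    · simp [← hsort, Function.comp_assoc]

lemma finrank_jointKer_empty (q : F) (hβ : Monotone β)
    (h : ∀ j, (Finset.univ.filter fun i => β i = j).card = m j) :
    Module.finrank F (jointKer q ∅ m) = (fiberMonoPerms β ∅).card := by
  rw [card_fiberMonoPerms_empty hβ h, jointKer_empty,
    Module.finrank_eq_card_basis (contentBasis F (sum_eq_of_card_filter_eq h))]

lemma card_filter_eq_comp_succAbove_add (β : Fin (N + 1) → Fin l) (v : Fin (N + 1)) (j : Fin l) :
    (Finset.univ.filter fun i => β i = j).card =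
      (Finset.univ.filter fun i => (β ∘ v.succAbove) i = j).card +
        (Pi.single (β v) 1 : Fin l → ℕ) j := by
  simp only [Finset.card_filter, Fin.sum_univ_succAbove _ v, Function.comp_apply,
    Pi.single_apply, eq_comm (a := β v), add_comm]

lemma finrank_jointKer_univ (hq : ∀ r, ∑ i ∈ Finset.range (r + 1), q ^ i ≠ 0) (hβ : Monotone β)
    (h : ∀ j, (Finset.univ.filter fun i => β i = j).card = m j) :
    Module.finrank F (jointKer q Set.univ m) = (fiberMonoPerms β Set.univ).card := by
  let P (S : Set (Fin l)) : Prop := ∀ {N : ℕ} {m : Fin l → ℕ} {β : Fin N → Fin l}, Monotone β →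
    (∀ j, (Finset.univ.filter fun i => β i = j).card = m j) →
      Module.finrank F (jointKer q S m) = (fiberMonoPerms β S).card
  -- The recursion expresses the value at `Set.Ici j` by values at `Set.Ioi j`, so it is run
  -- backwards, from `∅` to `Set.univ`.
  suffices P ∅ → P Set.univ from this (fun hβ h => finrank_jointKer_empty q hβ h) hβ h
  refine upperSet_induction (P := fun S => P S → P Set.univ) id fun j hIci hIoi => hIci ?_
  intro N m β hβ h
  by_cases hj : j ∈ Set.range β
  · obtain ⟨v, rfl⟩ := hj
    cases N with
    | zero => exact v.elim0
    | succ N =>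
      obtain rfl : (fun j => (Finset.univ.filter fun i => (β ∘ v.succAbove) i = j).card) +
          Pi.single (β v) 1 = m := funext fun j => by
        rw [← h, card_filter_eq_comp_succAbove_add β v, Pi.add_apply]
      have hker := finrank_jointKer_Ioi hq (β v) fun j =>
        (Finset.univ.filter fun i => (β ∘ v.succAbove) i = j).card
      have hcard := card_fiberMonoPerms hβ (Set.self_notMem_Ioi (a := β v))
      rw [Set.Ioi_insert] at hcard
      rw [hIoi hβ h, hIoi (hβ.comp (Fin.strictMono_succAbove v).monotone) fun _ => rfl] at hker
      omega
  · have hm : m j = 0 := by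
      rw [← h, Finset.card_eq_zero, Finset.filter_eq_empty_iff]
      exact fun i _ hi => hj ⟨i, hi⟩
    rw [jointKer_Ici_eq_of_content_eq_zero q hm, hIoi hβ h, ← Set.Ioi_insert,
      fiberMonoPerms_insert_of_notMem_range hj]

end JointKernelDimension

section PosetDerangements

variable {l N : ℕ} {c : Fin l → ℕ} {x b : ℕ}

lemma nsum_succ (c : Fin l → ℕ) (j : Fin l) : nsum l c (j + 1) = nsum l c j + c j := by
  have hinsert : Finset.univ.filter (fun t : Fin l => (t : ℕ) < j + 1) =
      insert j (Finset.univ.filter fun t : Fin l => (t : ℕ) < j) := by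
    ext t
    simp [← Fin.ext_iff, le_iff_eq_or_lt]
  rw [nsum, hinsert, Finset.sum_insert (by simp), add_comm, nsum]

lemma nsum_mono (c : Fin l → ℕ) : Monotone (nsum l c) := fun _ _ h =>
  Finset.sum_le_sum_of_subset <| Finset.monotone_filter_right _ fun _ _ ht => ht.trans_le h

lemma nsum_of_le (c : Fin l → ℕ) (h : l ≤ b) : nsum l c b = ∑ j, c j := by
  rw [nsum, Finset.filter_true_of_mem fun t _ => t.2.trans_le h]

lemma blockOf_le_iff (hx : x < ∑ j, c j) : blockOf l c x ≤ b ↔ x < nsum l c (b + 1) := by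
  have hne : {j : ℕ | x < nsum l c (j + 1)}.Nonempty := ⟨l, by simpa [nsum_of_le c l.le_succ]⟩
  exact ⟨fun h => (Nat.sInf_mem hne).trans_le (nsum_mono c (Nat.succ_le_succ h)),
    fun h => Nat.sInf_le h⟩

lemma le_blockOf_iff (hx : x < ∑ j, c j) : b ≤ blockOf l c x ↔ nsum l c b ≤ x := by
  cases b with
  | zero => simp [nsum]
  | succ b => rw [Nat.succ_le_iff, ← not_le, blockOf_le_iff hx, not_lt]

lemma blockOf_lt (hx : x < ∑ j, c j) : blockOf l c x < l := by
  rw [← not_le, le_blockOf_iff hx, nsum_of_le c le_rfl]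
  exact hx.not_ge

/-- The chain of `P_c` containing a label, as a letter. -/
def chainLetter (hc : ∑ j, c j = N) (x : Fin N) : Fin l :=
  ⟨blockOf l c x, blockOf_lt (hc ▸ x.2)⟩

lemma chainLetter_monotone (hc : ∑ j, c j = N) : Monotone (chainLetter hc) := fun x y h =>
  (blockOf_le_iff (hc ▸ x.2)).2 <|
    (Fin.le_def.1 h).trans_lt <| (blockOf_le_iff (hc ▸ y.2)).1 le_rfl

lemma card_filter_chainLetter_eq (hc : ∑ j, c j = N) (j : Fin l) :
    (Finset.univ.filter fun x => chainLetter hc x = j).card = c j := by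
  have hIco : (Finset.univ.filter fun x => chainLetter hc x = j).map Fin.valEmbedding =
      Finset.Ico (nsum l c j) (nsum l c (j + 1)) := by
    ext x
    have hle : nsum l c (j + 1) ≤ N := by
      rw [← hc, ← nsum_of_le c le_rfl]
      exact nsum_mono c j.2
    have hiff (x : Fin N) : chainLetter hc x = j ↔ nsum l c j ≤ x ∧ x < nsum l c (j + 1) := by
      rw [Fin.ext_iff, ← le_blockOf_iff (hc ▸ x.2), ← blockOf_le_iff (hc ▸ x.2)]
      exact le_antisymm_iff.trans and_comm
    simp only [Finset.mem_map, Finset.mem_filter_univ, hiff, Fin.valEmbedding_apply,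
      Finset.mem_Ico]
    exact ⟨fun ⟨_, hy, hyx⟩ => hyx ▸ hy, fun hx => ⟨⟨x, hx.2.trans_le hle⟩, hx, rfl⟩⟩
  rw [← Finset.card_map, hIco, Nat.card_Ico, nsum_succ, Nat.add_sub_cancel_left]

lemma isLinExt_iff (hc : ∑ j, c j = N) (π : Equiv.Perm (Fin N)) :
    isLinExt l N c π ↔
      ∀ a b, a < b → chainLetter hc a = chainLetter hc b → π⁻¹ a < π⁻¹ b := by
  simp only [chainLetter, Fin.mk.injEq]
  constructor
  · intro h a b hab hβ
    refine lt_of_le_of_ne (le_of_not_gt fun hba => ?_) (π⁻¹.injective.ne hab.ne)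
    exact hab.not_gt (by simpa using h _ _ hba (by simp [hβ]))
  · intro h a b hab hβ
    refine lt_of_le_of_ne (le_of_not_gt fun hba => ?_) (π.injective.ne hab.ne)
    exact hab.not_gt (by simpa using h _ _ hba hβ.symm)

lemma posetDerangeCount_eq_card_fiberMonoPerms (hc : ∑ j, c j = N) :
    posetDerangeCount l N c = (fiberMonoPerms (chainLetter hc) Set.univ).card := by
  refine Finset.card_equiv (Equiv.inv _) fun π => ?_
  have hfix : (∀ a, π a ≠ a) ↔ ∀ a, π⁻¹ a ≠ a :=
    forall_congr' fun a => (Equiv.Perm.inv_eq_iff_eq.trans eq_comm).not.symm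
  simp [mem_fiberMonoPerms, isLinExt_iff hc, hfix]

lemma finrank_jointKer_eq_posetDerangeCount {F : Type*} [Field F] {q : F}
    (hq : ∀ r, ∑ i ∈ Finset.range (r + 1), q ^ i ≠ 0) (c : Fin l → ℕ) :
    Module.finrank F (jointKer q Set.univ c) = posetDerangeCount l (∑ j, c j) c := by
  rw [posetDerangeCount_eq_card_fiberMonoPerms rfl]
  exact finrank_jointKer_univ hq (chainLetter_monotone rfl) (card_filter_chainLetter_eq rfl)

end PosetDerangements

section LibraryMatrix

open Polynomial

variable {R S : Type*} [CommRing R] [CommRing S] {N l : ℕ} {m : Fin l → ℕ}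

/-- The matrix of a library operator in the basis of words of content `m`, in row convention. -/
def libraryMatrix (N : ℕ) (m : Fin l → ℕ) (q : R) (y : Fin l → R) :
    Matrix (Words N l m) (Words N l m) R :=
  Matrix.of fun w u => library q y (Finsupp.single (List.ofFn w.1) 1) (List.ofFn u.1)

/-- The basis of `jointKer q ∅ m` consisting of the words of content `m`. -/
def jointKerEmptyBasis (q : R) (hm : ∑ j, m j = N) :
    Module.Basis (Words N l m) R (jointKer q ∅ m) :=
  (contentBasis R hm).map (LinearEquiv.ofEq _ _ (jointKer_empty q m).symm)

lemma contentBasis_repr_apply (hm : ∑ j, m j = N) (v : contentSubmodule R m) (w : Words N l m) :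
    (contentBasis R hm).repr v w = (v : WordModule R (Fin l)) (List.ofFn w.1) :=
  rfl

lemma jointKerEmptyBasis_repr_apply (q : R) (hm : ∑ j, m j = N) (v : jointKer q ∅ m)
    (w : Words N l m) :
    (jointKerEmptyBasis q hm).repr v w = (v : WordModule R (Fin l)) (List.ofFn w.1) := by
  rw [jointKerEmptyBasis, Module.Basis.map_repr, LinearEquiv.trans_apply,
    contentBasis_repr_apply, LinearEquiv.ofEq_symm, LinearEquiv.coe_ofEq_apply]

lemma coe_jointKerEmptyBasis (q : R) (hm : ∑ j, m j = N) (w : Words N l m) :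
    (jointKerEmptyBasis q hm w : WordModule R (Fin l)) = Finsupp.single (List.ofFn w.1) 1 := by
  rw [jointKerEmptyBasis, Module.Basis.map_apply, LinearEquiv.coe_ofEq_apply, coe_contentBasis]

lemma toMatrix_libraryOn_empty {F : Type*} [Field F] (q : F) (hm : ∑ j, m j = N)
    (y : Fin l → F) :
    LinearMap.toMatrix (jointKerEmptyBasis q hm) (jointKerEmptyBasis q hm) (libraryOn q ∅ m y) =
      (libraryMatrix N m q y).transpose := by
  ext w u
  rw [LinearMap.toMatrix_apply, jointKerEmptyBasis_repr_apply, coe_libraryOn_apply,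
    coe_jointKerEmptyBasis, Matrix.transpose_apply, libraryMatrix, Matrix.of_apply]

lemma charpoly_libraryMatrix_of_ne_zero {F : Type*} [Field F] {q : F}
    (hq : ∀ r, ∑ i ∈ Finset.range (r + 1), q ^ i ≠ 0) (hm : ∑ j, m j = N) (y : Fin l → F) :
    (libraryMatrix N m q y).charpoly = ∏ a ∈ Finset.Iic m,
      (X - C (eigenvalue q y a)) ^ posetDerangeCount l (∑ j, (m - a) j) (m - a) := by
  rw [← Matrix.charpoly_transpose, ← toMatrix_libraryOn_empty q hm, LinearMap.charpoly_toMatrix]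
  exact charpoly_libraryOn_empty hq (finrank_jointKer_eq_posetDerangeCount hq) m y

variable {α : Type*} [LinearOrder α] [Fintype α]

/-- Application of a ring homomorphism to the coefficients of a combination of words. -/
def mapCoeffs (α : Type*) (f : R →+* S) : WordModule R α →ₛₗ[f] WordModule S α where
  toFun := Finsupp.mapRange f f.map_zero
  map_add' := Finsupp.mapRange_add f.map_add
  map_smul' _ _ := Finsupp.mapRange_smul' _ _ _ (f.map_mul _)

omit [LinearOrder α] [Fintype α] in
@[simp]
lemma mapCoeffs_apply (f : R →+* S) (v : WordModule R α) (w : List α) :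
    mapCoeffs α f v w = f (v w) :=
  rfl

omit [LinearOrder α] [Fintype α] in
@[simp]
lemma mapCoeffs_single (f : R →+* S) (w : List α) (c : R) :
    mapCoeffs α f (Finsupp.single w c) = Finsupp.single w (f c) :=
  Finsupp.mapRange_single (hf := f.map_zero)

omit [LinearOrder α] [Fintype α] in
@[simp]
lemma mapCoeffs_prepend (f : R →+* S) (a : α) (v : WordModule R α) :
    mapCoeffs α f (prepend a v) = prepend a (mapCoeffs α f v) :=
  (Finsupp.mapDomain_mapRange _ _ _ f.map_zero f.map_add).symm

lemma mapCoeffs_skewDerivWord (f : R →+* S) (q : R) (w : List α) (j : α) :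
    mapCoeffs α f (skewDerivWord q w j) = skewDerivWord (f q) w j := by
  induction w generalizing j with
  | nil => simp [skewDerivWord]
  | cons a u ih =>
    simp only [skewDerivWord, map_add, map_smulₛₗ, mapCoeffs_prepend, ih, apply_ite f, map_one,
      apply_ite (mapCoeffs α f), mapCoeffs_single, map_sub, map_sum, map_zero]

lemma mapCoeffs_library_single (f : R →+* S) (q : R) (y : α → R) (w : List α) :
    mapCoeffs α f (library q y (Finsupp.single w 1)) =
      library (f q) (f ∘ y) (Finsupp.single w 1) := by
  simp [library_apply, mapCoeffs_skewDerivWord]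

lemma map_libraryMatrix (f : R →+* S) (q : R) (y : Fin l → R) :
    (libraryMatrix N m q y).map f = libraryMatrix N m (f q) (f ∘ y) := by
  ext w u
  simp [libraryMatrix, ← mapCoeffs_library_single]

lemma map_eigenvalue (f : R →+* S) (q : R) (y : α → R) (a : α → ℕ) :
    f (eigenvalue q y a) = eigenvalue (f q) (f ∘ y) a := by
  simp [eigenvalue]

lemma map_prod_X_sub_eigenvalue (f : R →+* S) (q : R) (y : Fin l → R) (d : (Fin l → ℕ) → ℕ) :
    (∏ a ∈ Finset.Iic m, (X - C (eigenvalue q y a)) ^ d a).map f =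
      ∏ a ∈ Finset.Iic m, (X - C (eigenvalue (f q) (f ∘ y) a)) ^ d a := by
  simp only [Polynomial.map_prod, Polynomial.map_pow, Polynomial.map_sub, map_X, map_C,
    map_eigenvalue f]

lemma charpoly_libraryMatrix (hm : ∑ j, m j = N) (q : R) (y : Fin l → R) :
    (libraryMatrix N m q y).charpoly = ∏ a ∈ Finset.Iic m,
      (X - C (eigenvalue q y a)) ^ posetDerangeCount l (∑ j, (m - a) j) (m - a) := by
  -- Both sides are specializations from the ring of polynomials in indeterminates `q` and `y j`,
  -- where `[r + 1]_q ≠ 0`.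
  let A := MvPolynomial (Option (Fin l)) ℤ
  let q₀ : A := MvPolynomial.X none
  let y₀ : Fin l → A := fun j => MvPolynomial.X (some j)
  have hq₀ (r : ℕ) : ∑ i ∈ Finset.range (r + 1), algebraMap A (FractionRing A) q₀ ^ i ≠ 0 := by
    simp only [← map_pow, ← map_sum]
    refine (map_ne_zero_iff _ (IsFractionRing.injective A (FractionRing A))).2 fun h => ?_
    have := congrArg (MvPolynomial.eval 1) h
    simp [q₀] at this
    omega
  have huniv : (libraryMatrix N m q₀ y₀).charpoly = ∏ a ∈ Finset.Iic m,
      (X - C (eigenvalue q₀ y₀ a)) ^ posetDerangeCount l (∑ j, (m - a) j) (m - a) := by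
    refine Polynomial.map_injective _ (IsFractionRing.injective A (FractionRing A)) ?_
    rw [← Matrix.charpoly_map, map_libraryMatrix, map_prod_X_sub_eigenvalue,
      charpoly_libraryMatrix_of_ne_zero hq₀ hm]
  let f : A →+* R := MvPolynomial.eval₂Hom (Int.castRingHom R) fun i => i.elim q y
  have hq : f q₀ = q := MvPolynomial.eval₂Hom_X' _ _ _
  have hy : f ∘ y₀ = y := funext fun _ => MvPolynomial.eval₂Hom_X' _ _ _
  rw [← hq, ← hy, ← map_libraryMatrix, Matrix.charpoly_map, huniv, map_prod_X_sub_eigenvalue]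

end LibraryMatrix

section HeckeOperators

variable {R : Type*} [CommRing R] {α : Type*} [LinearOrder α]

omit [LinearOrder α] in
lemma wordModule_hom_ext {M : Type*} [AddCommGroup M] [Module R M] {f g : WordModule R α →ₗ[R] M}
    (h : ∀ w, f (Finsupp.single w 1) = g (Finsupp.single w 1)) : f = g :=
  Finsupp.lhom_ext' fun w => LinearMap.ext_ring (h w)

/-- The value of the Hecke generator `T_{k+1}` (paper indexing) on a single word; it is zero on
words of length less than `k + 2`. -/
def heckeWord (q : R) : ℕ → List α → WordModule R α
  | 0, a :: b :: u => (if b ≤ a then q else 1) • Finsupp.single (b :: a :: u) 1 +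
      (if a < b then q - 1 else 0) • Finsupp.single (a :: b :: u) 1
  | k + 1, a :: u => prepend a (heckeWord q k u)
  | _, _ => 0

/-- The Hecke generator `T_{k+1}` (paper indexing), acting on words of all lengths. -/
def hecke (q : R) (k : ℕ) : Module.End R (WordModule R α) :=
  Finsupp.linearCombination R (heckeWord q k)

/-- The product `T_k T_{k-1} ⋯ T_1` (paper indexing) of operators acting from the right. -/
def heckeProd (q : R) : ℕ → Module.End R (WordModule R α)
  | 0 => LinearMap.id
  | k + 1 => heckeProd q k ∘ₗ hecke q k

/-- The operator scaling a word with first letter `j` by `y j`. -/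
def weighting (y : α → R) : Module.End R (WordModule R α) :=
  Finsupp.linearCombination R fun w => (w.head?.elim 0 y) • Finsupp.single w 1

lemma hecke_single (q : R) (k : ℕ) (w : List α) :
    hecke q k (Finsupp.single w 1) = heckeWord q k w := by
  simp [hecke]

lemma hecke_zero_prepend_prepend (q : R) (a b : α) (v : WordModule R α) :
    hecke q 0 (prepend a (prepend b v)) =
      (if b ≤ a then q else 1) • prepend b (prepend a v) +
        (if a < b then q - 1 else 0) • prepend a (prepend b v) := by
  have h : hecke q 0 ∘ₗ prepend a ∘ₗ prepend b =
      (if b ≤ a then q else 1) • prepend b ∘ₗ prepend a +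
      (if a < b then q - 1 else 0) • prepend a ∘ₗ prepend b :=
    wordModule_hom_ext fun w => by
      simp only [LinearMap.comp_apply, LinearMap.add_apply, LinearMap.smul_apply, prepend_single,
        hecke_single, heckeWord]
  exact LinearMap.congr_fun h v

lemma hecke_succ_prepend (q : R) (k : ℕ) (a : α) (v : WordModule R α) :
    hecke q (k + 1) (prepend a v) = prepend a (hecke q k v) := by
  have h : hecke q (k + 1) ∘ₗ prepend a = prepend a ∘ₗ hecke q k :=
    wordModule_hom_ext fun w => by simp [hecke_single, heckeWord]
  exact LinearMap.congr_fun h v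

lemma heckeProd_succ_prepend (q : R) (k : ℕ) (a : α) (v : WordModule R α) :
    heckeProd q (k + 1) (prepend a v) = hecke q 0 (prepend a (heckeProd q k v)) := by
  induction k generalizing v with
  | zero => rfl
  | succ k ih => rw [heckeProd, LinearMap.comp_apply, hecke_succ_prepend, ih]; rfl

omit [LinearOrder α] in
lemma weighting_prepend (y : α → R) (a : α) (v : WordModule R α) :
    weighting y (prepend a v) = y a • prepend a v := by
  have h : weighting y ∘ₗ prepend a = y a • prepend a :=
    wordModule_hom_ext fun w => by simp [weighting]
  exact LinearMap.congr_fun h v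

variable [Fintype α]

lemma library_one_prepend (q : R) (a : α) (v : WordModule R α) :
    library q 1 (prepend a v) = prepend a v + hecke q 0 (prepend a (library q 1 v)) := by
  have hcorr : prepend a ((q - 1) • library q ((Set.Ioi a).indicator 1) v) =
      ∑ j, (if a < j then q - 1 else 0) • prepend a (prepend j (skewDeriv q j v)) := by
    simp [library_indicator_apply, Finset.sum_filter, Finset.smul_sum, apply_ite (prepend a)]
  simp only [library_apply, Pi.one_apply, one_smul, skewDeriv_prepend, map_add, map_sum, map_smul,
    hecke_zero_prepend_prepend, Finset.sum_add_distrib, ← hcorr, apply_ite (prepend _), map_zero,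
    Finset.sum_ite_eq', Finset.mem_univ, if_true]
  rw [add_left_comm]

lemma sum_heckeProd_single (q : R) (w : List α) :
    ∑ k ∈ Finset.range w.length, heckeProd q k (Finsupp.single w 1) =
      library q 1 (Finsupp.single w 1) := by
  induction w with
  | nil => simp [library_apply, skewDerivWord]
  | cons a w ih =>
    rw [← prepend_single, library_one_prepend, ← ih, List.length_cons, Finset.sum_range_succ',
      add_comm]
    simp only [heckeProd_succ_prepend, map_sum]
    rfl

lemma weighting_library_one (q : R) (y : α → R) (v : WordModule R α) :
    weighting y (library q 1 v) = library q y v := by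
  simp [library_apply, weighting_prepend]

end HeckeOperators

section HeckeMatrices

variable {R : Type*} [CommRing R] {n l : ℕ} {m : Fin l → ℕ}

lemma ofFn_comp_swap_zero_one {α : Type*} (w : Fin (n + 2) → α) :
    List.ofFn (w ∘ Equiv.swap 0 1) = w 1 :: w 0 :: List.ofFn fun i : Fin n => w i.succ.succ := by
  have h (i : Fin n) : Equiv.swap (0 : Fin (n + 2)) 1 i.succ.succ = i.succ.succ :=
    Equiv.swap_apply_of_ne_of_ne (Fin.succ_ne_zero _) (Fin.succ_succ_ne_one i)
  simp [List.ofFn_succ, h]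

lemma ofFn_comp_swap_succ {α : Type*} (w : Fin (n + 1) → α) (i j : Fin n) :
    List.ofFn (w ∘ Equiv.swap i.succ j.succ) =
      w 0 :: List.ofFn (Fin.tail w ∘ Equiv.swap i j) := by
  have h (k : Fin n) : Equiv.swap i.succ j.succ k.succ = (Equiv.swap i j k).succ :=
    (Fin.succ_injective n).swap_apply i j k
  have h0 : Equiv.swap i.succ j.succ 0 = 0 :=
    Equiv.swap_apply_of_ne_of_ne i.succ_ne_zero.symm j.succ_ne_zero.symm
  simp [List.ofFn_succ, h, h0, Fin.tail, Function.comp_def]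

lemma heckeWord_ofFn {α : Type*} [LinearOrder α] (q : R) {k : ℕ} (hk : k + 1 < n)
    (w : Fin n → α) :
    heckeWord q k (List.ofFn w) =
      (if w ⟨k + 1, hk⟩ ≤ w ⟨k, Nat.lt_of_succ_lt hk⟩ then q else 1) •
          Finsupp.single
            (List.ofFn (w ∘ Equiv.swap ⟨k, Nat.lt_of_succ_lt hk⟩ ⟨k + 1, hk⟩)) 1 +
        (if w ⟨k, Nat.lt_of_succ_lt hk⟩ < w ⟨k + 1, hk⟩ then q - 1 else 0) •
          Finsupp.single (List.ofFn w) 1 := by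
  induction k generalizing n with
  | zero =>
    obtain ⟨n, rfl⟩ := Nat.exists_eq_add_of_le' hk
    have hw : List.ofFn w = w 0 :: w 1 :: List.ofFn fun i : Fin n => w i.succ.succ := by
      rw [List.ofFn_succ, List.ofFn_succ, Fin.succ_zero_eq_one]
    have hswap := ofFn_comp_swap_zero_one w
    rw [hw, heckeWord, ← hswap]
    rfl
  | succ k ih =>
    obtain ⟨n, rfl⟩ := Nat.exists_eq_add_of_le' (Nat.zero_lt_of_lt hk)
    have hk' : k + 1 < n := Nat.lt_of_succ_lt_succ hk
    have hswap := ofFn_comp_swap_succ w ⟨k, Nat.lt_of_succ_lt hk'⟩ ⟨k + 1, hk'⟩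
    simp only [Fin.succ_mk] at hswap
    have hw : List.ofFn w = w 0 :: List.ofFn (Fin.tail w) := List.ofFn_succ
    rw [hswap, hw, heckeWord, ih hk']
    simp only [map_add, map_smul, prepend_single]
    rfl

/-- The matrix `M`, in row convention, describes the restriction of `F` to the span of the words
of content `m`. -/
def Represents (M : Matrix (Words n l m) (Words n l m) R)
    (F : Module.End R (WordModule R (Fin l))) : Prop :=
  ∀ w : Words n l m, F (Finsupp.single (List.ofFn w.1) 1) =
    ∑ u, M w u • Finsupp.single (List.ofFn u.1) 1

lemma Represents.eq_libraryMatrix {M : Matrix (Words n l m) (Words n l m) R} {q : R}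
    {y : Fin l → R} (h : Represents M (library q y)) : M = libraryMatrix n m q y := by
  ext w u
  simp [libraryMatrix, h w, Finsupp.finsetSum_apply, Finsupp.single_apply,
    List.ofFn_injective.eq_iff, Subtype.coe_inj]

lemma Represents.one : Represents (1 : Matrix (Words n l m) (Words n l m) R) LinearMap.id := by
  intro w
  simp [Matrix.one_apply]

lemma Represents.mul {M N : Matrix (Words n l m) (Words n l m) R}
    {F G : Module.End R (WordModule R (Fin l))} (hM : Represents M F) (hN : Represents N G) :
    Represents (M * N) (G ∘ₗ F) := by
  intro w
  simp only [LinearMap.comp_apply, hM w, map_sum, map_smul, hN _, Matrix.mul_apply,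
    Finset.sum_smul, Finset.smul_sum, smul_smul]
  exact Finset.sum_comm

lemma Represents.sum {ι : Type*} {s : Finset ι} {M : ι → Matrix (Words n l m) (Words n l m) R}
    {F : ι → Module.End R (WordModule R (Fin l))} (h : ∀ i ∈ s, Represents (M i) (F i)) :
    Represents (∑ i ∈ s, M i) (∑ i ∈ s, F i) := by
  intro w
  simp only [Matrix.sum_apply, LinearMap.sum_apply, Finset.sum_smul]
  rw [Finset.sum_comm]
  exact Finset.sum_congr rfl fun i hi => h i hi w

lemma represents_genMatW (q : K) {k : ℕ} (hk : k + 1 < n) :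
    Represents (genMatW n l m q k) (hecke q k) := by
  intro w
  let i : Fin n := ⟨k, Nat.lt_of_succ_lt hk⟩
  let i' : Fin n := ⟨k + 1, hk⟩
  let w' : Words n l m :=
    ⟨w.1 ∘ Equiv.swap i i', fun j => (card_filter_comp_perm w.1 _ j).trans (w.2 j)⟩
  have hw' (u : Words n l m) : u.1 = w.1 ∘ Equiv.swap i i' ↔ u = w' :=
    (Subtype.ext_iff (a1 := u) (a2 := w')).symm
  have hentry (u : Words n l m) : genMatW n l m q k w u =
      (if w.1 i' ≤ w.1 i then q else 1) * (if u = w' then 1 else 0) +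
        (if w.1 i < w.1 i' then q - 1 else 0) * (if u = w then 1 else 0) := by
    rw [genMatW, dif_pos hk]
    by_cases h : w.1 i' ≤ w.1 i
    · simp [i, i', hw', h, h.not_gt]
    · simp [i, i', hw', h, not_le.1 h]
  rw [hecke_single, heckeWord_ofFn q hk]
  simp [hentry, add_smul, Finset.sum_add_distrib, w', i, i']

lemma represents_prodGenW (q : K) {k : ℕ} (hk : k ≤ n - 1) :
    Represents (prodGenW n l m q k) (heckeProd q k) := by
  induction k with
  | zero => exact .one
  | succ k ih => exact (represents_genMatW q (by omega)).mul (ih (by omega))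

lemma represents_XW (q : K) (xb : Fin l → K) :
    Represents (XW n l m q xb) (weighting fun j => xb j /
      (q ^ (∑ t ∈ Finset.univ.filter fun t : Fin l => j < t, m t) * qInt q (m j))) := by
  intro w
  cases n with
  | zero => simp [XW, weighting]
  | succ n =>
    rw [List.ofFn_succ, ← prepend_single, weighting_prepend, prepend_single, ← List.ofFn_succ]
    simp only [XW, n.succ_pos, dif_pos, ite_smul, zero_smul, Finset.sum_ite_eq', Finset.mem_univ,
      if_true]
    rfl

lemma represents_TWm (q : K) (xb : Fin l → K) :
    Represents (TWm n l m q xb) (library q fun j => xb j /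
      (q ^ (∑ t ∈ Finset.univ.filter fun t : Fin l => j < t, m t) * qInt q (m j))) := by
  have hsum : Represents (∑ k ∈ Finset.range n, prodGenW n l m q k)
      (∑ k ∈ Finset.range n, heckeProd q k) :=
    .sum fun k hk => represents_prodGenW q (Nat.le_sub_one_of_lt (Finset.mem_range.1 hk))
  intro w
  rw [TWm, ← weighting_library_one, ← sum_heckeProd_single, List.length_ofFn,
    ← LinearMap.sum_apply, ← LinearMap.comp_apply]
  exact hsum.mul (represents_XW q xb) w

end HeckeMatrices

section TsetlinLibrary

variable {n l : ℕ} {m : Fin l → ℕ}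

lemma sub_nsum_succ (hm : ∑ j, m j = n) (j : Fin l) :
    n - nsum l m (j + 1) = ∑ t ∈ Finset.univ.filter fun t : Fin l => j < t, m t := by
  have hsplit := Finset.sum_filter_add_sum_filter_not Finset.univ
    (fun t : Fin l => (t : ℕ) < j + 1) m
  simp only [not_lt, Nat.succ_le_iff, ← Fin.lt_def] at hsplit
  exact (Nat.eq_sub_of_add_eq' (hsplit.trans hm)).symm

lemma lambdaA_eq_eigenvalue (hm : ∑ j, m j = n) (q : K) (xb : Fin l → K) (a : Fin l → ℕ) :
    lambdaA n l m q xb a = eigenvalue q (fun j => xb j /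
      (q ^ (∑ t ∈ Finset.univ.filter fun t : Fin l => j < t, m t) * qInt q (m j))) a := by
  refine Finset.sum_congr rfl fun j _ => ?_
  rw [sub_nsum_succ hm, mul_div_right_comm]
  rfl

lemma prod_Iic_eq_prod_fin {M : Type*} [CommMonoid M] (f : (Fin l → ℕ) → M) :
    ∏ a ∈ Finset.Iic m, f a = ∏ a : ∀ j, Fin (m j + 1), f fun j => a j := by
  refine (Finset.prod_bij (fun a _ j => (a j : ℕ)) (fun a _ => ?_) (fun a _ b _ h => ?_)
    (fun a ha => ?_) fun _ _ => rfl).symm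
  · exact Finset.mem_Iic.2 fun j => Fin.is_le (a j)
  · exact funext fun j => Fin.ext (congrFun h j)
  · exact ⟨fun j => ⟨a j, Nat.lt_succ_of_le (Finset.mem_Iic.1 ha j)⟩, Finset.mem_univ _, rfl⟩

theorem qTsetlin_words_charpoly_general (n l : ℕ) (q : K) (hq : q ≠ 0) (m : Fin l → ℕ)
    (hm : ∀ j, 1 ≤ m j) (hmn : ∑ j, m j = n) (xb : Fin l → K) :
    Matrix.charpoly (TWm n l m q xb) =
      ∏ a : (∀ j : Fin l, Fin (m j + 1)),
        (Polynomial.X - Polynomial.C (lambdaA n l m q xb fun j => (a j : ℕ))) ^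
          posetDerangeCount l (n - ∑ j, (a j : ℕ)) (fun j => m j - (a j : ℕ)) := by
  rw [(represents_TWm q xb).eq_libraryMatrix, charpoly_libraryMatrix hmn, prod_Iic_eq_prod_fin]
  refine Finset.prod_congr rfl fun a _ => ?_
  have hlabels : ∑ j, (m j - (a j : ℕ)) = n - ∑ j, (a j : ℕ) := by
    rw [Finset.sum_tsub_distrib _ fun j _ => Fin.is_le (a j), hmn]
  rw [lambdaA_eq_eigenvalue hmn, ← hlabels]
  rfl

end TsetlinLibrary

/-- For `q ≠ 0` and a composition `m` of `n` with positive parts, the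
characteristic polynomial of the transition matrix of `T_{W_m}(q,x̄)` is the product, over
all weak compositions `a` with `a_j ≤ m_j` (equivalently, all upper sets `S` of `P_m`), of
`(t - λ_a(q,x̄))^{d_{P_m∖S}}`, where `P_m∖S` is the union of chains of sizes `m_j - a_j`. -/
theorem qTsetlin_words_charpoly (n l : ℕ) (q : ℂ) (hq : q ≠ 0) (m : Fin l → ℕ)
    (hm : ∀ j, 1 ≤ m j) (hmn : ∑ j, m j = n) (xb : Fin l → ℂ) :
    Matrix.charpoly (TWm n l m q xb) =
      ∏ a : (∀ j : Fin l, Fin (m j + 1)),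
        (Polynomial.X - Polynomial.C (lambdaA n l m q xb fun j => (a j : ℕ))) ^
          posetDerangeCount l (n - ∑ j, (a j : ℕ)) (fun j => m j - (a j : ℕ)) :=
  qTsetlin_words_charpoly_general n l q hq m hm hmn xb

end QTsetlin
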